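/- arXiv:1802.03437 — 3 statements merged into one kernel-verified Lean document; each statement's English description precedes it below -/
import Mathlib

section
/- Let Q be a primitive positive-definite quaternary integer-valued quadratic form with level N(Q), let p be an odd prime, and let n be a positive integer. Suppose Q is isotropic over ℚ_p (i.e. there exists a nonzero x ∈ ℚ_p⁴ with Q(x) = 0) and n is represented by Q over ℤ_p. Then the local density β_p(Q;n) exists and satisfies β_p(Q;n) ≥ (1 − 1/p) · p^(−ord_p(N(Q))), where ord_p denotes the p-adic valuation. -/
open scoped BigOperators

/-- Value of the quadratic form with Gram matrix `A` (symmetric, even diagonal)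
over any commutative ring: `Q(x) = ∑ (aᵢᵢ/2) xᵢ² + ∑_{i<j} aᵢⱼ xᵢ xⱼ`. -/
def Qval {R : Type*} [CommRing R] (A : Matrix (Fin 4) (Fin 4) ℤ) (x : Fin 4 → R) : R :=
  (∑ i, ((A i i / 2 : ℤ) : R) * x i ^ 2) +
    ∑ i, ∑ j ∈ Finset.Ioi i, ((A i j : ℤ) : R) * (x i * x j)

/-- `A` is the Gram matrix of an integer-valued quadratic form. -/
def IsGram (A : Matrix (Fin 4) (Fin 4) ℤ) : Prop :=
  A.IsSymm ∧ ∀ i, 2 ∣ A i i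

/-- The form is primitive: the gcd of its coefficients is 1. -/
def IsPrimitiveQF (A : Matrix (Fin 4) (Fin 4) ℤ) : Prop :=
  ∀ d : ℤ, (∀ i, d ∣ A i i / 2) → (∀ i j, i ≠ j → d ∣ A i j) → IsUnit d

/-- The form is positive definite. -/
def PosDefQF (A : Matrix (Fin 4) (Fin 4) ℤ) : Prop :=
  (A.map (Int.cast : ℤ → ℝ)).PosDef

/-- `N` is the level of the form with Gram matrix `A`: the smallest positive integer
such that `N • A⁻¹` has integer entries and even diagonal. -/
def IsLevel (A : Matrix (Fin 4) (Fin 4) ℤ) (N : ℕ) : Prop :=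
  0 < N ∧
    (∃ B : Matrix (Fin 4) (Fin 4) ℤ,
      B.map (Int.cast : ℤ → ℚ) = (N : ℚ) • (A.map (Int.cast : ℤ → ℚ))⁻¹ ∧ ∀ i, 2 ∣ B i i) ∧
    ∀ M : ℕ, 0 < M →
      (∃ B : Matrix (Fin 4) (Fin 4) ℤ,
        B.map (Int.cast : ℤ → ℚ) = (M : ℚ) • (A.map (Int.cast : ℤ → ℚ))⁻¹ ∧ ∀ i, 2 ∣ B i i) →
      N ≤ M

/-- `n` is represented by the form over `ℤ`. -/
def Represented (A : Matrix (Fin 4) (Fin 4) ℤ) (n : ℕ) : Prop :=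
  ∃ x : Fin 4 → ℤ, Qval A x = (n : ℤ)

/-- `n` is locally represented: representable over `ℤ_p` for every prime `p`. -/
def LocallyRepresented (A : Matrix (Fin 4) (Fin 4) ℤ) (n : ℕ) : Prop :=
  ∀ (p : ℕ) [Fact p.Prime], ∃ x : Fin 4 → ℤ_[p], Qval A x = (n : ℤ_[p])

/-- Number of solutions of `Q(x) ≡ n mod p^k`. -/
noncomputable def localCount (A : Matrix (Fin 4) (Fin 4) ℤ) (p n k : ℕ) : ℕ :=
  Nat.card {x : Fin 4 → ZMod (p ^ k) // Qval A x = (n : ZMod (p ^ k))}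

/-- The local density `β_p(Q;n)` exists and is at least `c`. -/
def DensityBound (A : Matrix (Fin 4) (Fin 4) ℤ) (p n : ℕ) (c : ℝ) : Prop :=
  ∃ β : ℝ,
    Filter.Tendsto (fun k => (localCount A p n k : ℝ) / (p : ℝ) ^ (3 * k))
      Filter.atTop (nhds β) ∧ c ≤ β

/-!
Over `ℤ_p` with `p` odd, the form `2 Q` can be diagonalized to `∑ dᵢ xᵢ²`, and every `dᵢ` divides
the level. Split the solutions of `∑ dᵢ xᵢ² = n` modulo `p ^ k` by their reduction modulo `p`. By
Hensel's lemma the nonsingular reductions contribute their own density over `𝔽_p`, which is at least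
`1 - 1 / p` as soon as the reduced form has a nonsingular zero or represents `n` nonsingularly:
project the reduced quadric from such a point.

If neither happens, at most two `dᵢ` are units and every solution is divisible by `p` at these
indices. Substituting `p xᵢ` for these `xᵢ` and dividing the form by `p` multiplies the density by
at least `1 / p`. In a primitive isotropic vector `z` some `zᵢ` is a unit; then `p ∣ dᵢ`, and the
step removes one factor `p` from `dᵢ` while keeping `zᵢ`. So it is repeated at most
`ord_p dᵢ ≤ ord_p N` times.

The same substitution reduces the existence of the density at `n` to that at `n / p`, and hence to
the case `p ∤ n`, where all reductions are nonsingular.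
-/

namespace LocalDensity

section FiberCounting

open Finset in
lemma ncard_mul_eq_mul_ncard_of_fiber {α β : Type*} [Finite α] [Finite β] {f : α → β} {s : Set α}
    {t : Set β} {c k : ℕ} (hst : Set.MapsTo f s t)
    (hf : ∀ b ∈ t, (s ∩ f ⁻¹' {b}).ncard * k = c) : s.ncard * k = c * t.ncard := by
  classical
  have := Fintype.ofFinite α
  have := Fintype.ofFinite β
  have hmem (b : β) (hb : b ∈ t.toFinset) : #{a ∈ s.toFinset | f a = b} * k = c := by
    rw [← hf b (Set.mem_toFinset.1 hb), Set.ncard_eq_toFinset_card']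
    congr 2
    ext a
    simp
  rw [Set.ncard_eq_toFinset_card' s, Set.ncard_eq_toFinset_card' t,
    Finset.card_eq_sum_card_fiberwise (f := f) (t := t.toFinset) (by simpa using hst),
    Finset.sum_mul, Finset.sum_congr rfl hmem, Finset.sum_const, smul_eq_mul, mul_comm]

variable {G H : Type*} [AddGroup G] [AddGroup H] [Finite G] (φ : G →+ H)

lemma ncard_preimage_addMonoidHom [Finite H] (T : Set H) :
    (φ ⁻¹' T).ncard = Nat.card φ.ker * (T ∩ Set.range φ).ncard := by
  rw [← mul_one (φ ⁻¹' T).ncard]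
  refine ncard_mul_eq_mul_ncard_of_fiber (fun g hg ↦ ⟨hg, g, rfl⟩) ?_
  rintro _ ⟨ha, a, rfl⟩
  have hfiber : φ ⁻¹' T ∩ φ ⁻¹' {φ a} = φ ⁻¹' {φ a} :=
    Set.inter_eq_right.2 <| Set.preimage_mono <| Set.singleton_subset_iff.2 ha
  rw [hfiber, mul_one]
  exact Nat.card_congr (φ.fiberEquivKer a)

variable {φ} (hφ : Function.Surjective φ)
include hφ

lemma ncard_preimage_of_surjective (T : Set H) :
    (φ ⁻¹' T).ncard = Nat.card φ.ker * T.ncard := by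
  have := Finite.of_surjective φ hφ
  rw [ncard_preimage_addMonoidHom, hφ.range_eq, Set.inter_univ]

lemma card_eq_card_ker_mul_of_surjective : Nat.card G = Nat.card φ.ker * Nat.card H := by
  simpa using ncard_preimage_of_surjective hφ Set.univ

end FiberCounting

section SolutionDensity

/-- The number of elements of `S ⊆ M` relative to `|M| / |R|`, the expected number of solutions in
`M` of one equation with values in `R`. The local density of a quadratic form `Q` on `ℤ_pʳ` at `n`
is the limit over `k` of this quantity for `R = ℤ/p^k`, `M = Rʳ` and `S` the set of solutions of
`Q x = n` in `M`. -/
noncomputable def solutionDensity (R : Type*) {M : Type*} (S : Set M) : ℝ :=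
  Nat.card R * S.ncard / Nat.card M

variable (R : Type*) {M : Type*} [Finite M] {S T : Set M}

lemma solutionDensity_mono (h : S ⊆ T) : solutionDensity R S ≤ solutionDensity R T := by
  unfold solutionDensity
  gcongr
  exact T.toFinite

lemma solutionDensity_inter_add_diff (S T : Set M) :
    solutionDensity R (S ∩ T) + solutionDensity R (S \ T) = solutionDensity R S := by
  rw [solutionDensity, solutionDensity, solutionDensity,
    ← Set.ncard_inter_add_ncard_sdiff_eq_ncard S T, ← add_div, ← mul_add, Nat.cast_add]

end SolutionDensity

section FiniteField

open QuadraticMap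

/-- The vectors at which `Q` takes the value `m` and has nonzero differential `polar Q x`,
i.e. the smooth points of the affine quadric `Q = m`. -/
def nonsingularSolutions {R M : Type*} [CommRing R] [AddCommGroup M] [Module R M]
    (Q : QuadraticForm R M) (m : R) : Set M :=
  {x | Q x = m ∧ Q.polarBilin x ≠ 0}

variable {F V : Type*} [Field F] [AddCommGroup V] [Module F V]

lemma mem_nonsingularSolutions_of_ne_zero (hF : ringChar F ≠ 2) {Q : QuadraticForm F V} {x : V}
    {m : F} (hx : Q x = m) (hm : m ≠ 0) : x ∈ nonsingularSolutions Q m := by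
  refine ⟨hx, fun h ↦ ?_⟩
  have hxx : polar Q x x = 0 := LinearMap.congr_fun h x
  rw [polar_self, hx, nsmul_eq_mul, Nat.cast_ofNat] at hxx
  exact mul_ne_zero (Ring.two_ne_zero hF) hm hxx

variable [Finite F] [Finite V]

lemma solutionDensity_setOf_apply_ne_zero {l : V →ₗ[F] F} (hl : l ≠ 0) :
    solutionDensity F {x | l x ≠ 0} = Nat.card F - 1 := by
  have hsurj : Function.Surjective l.toAddMonoidHom := LinearMap.surjective hl
  have hcompl : (({0}ᶜ : Set F).ncard : ℝ) = Nat.card F - 1 := by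
    rw [Set.ncard_compl, Set.ncard_singleton, Nat.cast_sub Nat.card_pos, Nat.cast_one]
  have hncard : {x | l x ≠ 0}.ncard = _ := ncard_preimage_of_surjective hsurj {0}ᶜ
  have hF : (Nat.card F : ℝ) ≠ 0 := Nat.cast_ne_zero.2 Nat.card_pos.ne'
  have hker : (Nat.card l.toAddMonoidHom.ker : ℝ) ≠ 0 := Nat.cast_ne_zero.2 Nat.card_pos.ne'
  rw [solutionDensity, hncard, card_eq_card_ker_mul_of_surjective hsurj]
  push_cast
  rw [hcompl]
  field_simp

lemma le_solutionDensity_of_injective {l : V →ₗ[F] F} (hl : l ≠ 0) {S : Set V}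
    {g : {u // l u ≠ 0} → S × F} (hg : Function.Injective g) :
    1 - 1 / (Nat.card F : ℝ) ≤ solutionDensity F S := by
  have hF : (0 : ℝ) < Nat.card F := Nat.cast_pos.2 Nat.card_pos
  have hle : ({x | l x ≠ 0}.ncard : ℝ) ≤ S.ncard * Nat.card F := by
    have := Nat.card_le_card_of_injective g hg
    rw [Nat.card_prod] at this
    exact_mod_cast this
  calc 1 - 1 / (Nat.card F : ℝ)
      = solutionDensity F {x | l x ≠ 0} / Nat.card F := by
        rw [solutionDensity_setOf_apply_ne_zero hl]; field_simp
    _ ≤ Nat.card F * (S.ncard * Nat.card F) / Nat.card V / Nat.card F := by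
        unfold solutionDensity; gcongr
    _ = solutionDensity F S := by unfold solutionDensity; field_simp

variable (Q : QuadraticForm F V) {m : F}

lemma le_solutionDensity_nonsingularSolutions_of_zero (h : (nonsingularSolutions Q 0).Nonempty) :
    1 - 1 / (Nat.card F : ℝ) ≤ solutionDensity F (nonsingularSolutions Q m) := by
  obtain ⟨v, hv, hl⟩ := h
  -- For `polar Q v u ≠ 0` the line `u + F v` meets the quadric `Q = m` in exactly one point.
  let t (u : V) : F := (m - Q u) / Q.polarBilin v u
  have hmem (u : V) (hu : Q.polarBilin v u ≠ 0) : u + t u • v ∈ nonsingularSolutions Q m := by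
    have hvu : polar Q u v ≠ 0 := by rwa [polar_comm]
    constructor
    · have ht : t u * polar Q u v = m - Q u := by
        rw [polar_comm]; exact div_mul_cancel₀ _ hu
      simp [QuadraticMap.map_add, QuadraticMap.map_smul, hv, ht]
    · intro h
      have huv : polar Q (u + t u • v) v = 0 := LinearMap.congr_fun h v
      rw [polar_add_left, polar_smul_left, polar_self, hv, smul_zero, smul_zero, add_zero] at huv
      exact hvu huv
  refine le_solutionDensity_of_injective hl (g := fun u ↦ (⟨u + t u • v, hmem u u.2⟩, t u))
    fun u u' h ↦ ?_
  obtain ⟨h1, h2⟩ := Prod.ext_iff.1 h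
  have h1 : (u : V) + t u • v = u' + t u' • v := congrArg Subtype.val h1
  have h2 : t u = t u' := h2
  exact Subtype.ext (add_right_cancel (h2 ▸ h1))

lemma le_solutionDensity_nonsingularSolutions_of_not_zero
    (h0 : ¬(nonsingularSolutions Q 0).Nonempty) (h : (nonsingularSolutions Q m).Nonempty) :
    1 - 1 / (Nat.card F : ℝ) ≤ solutionDensity F (nonsingularSolutions Q m) := by
  obtain ⟨w, hw, hl⟩ := h
  have hQ (u : V) (hu : Q.polarBilin w u ≠ 0) : Q u ≠ 0 := fun hQu ↦
    h0 ⟨u, hQu, fun h ↦ hu <| by simpa [polar_comm] using LinearMap.congr_fun h w⟩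
  -- The line through `w` in a direction `u` with `polar Q w u ≠ 0` meets the quadric `Q = m` in
  -- exactly one further point.
  let c (u : V) : F := Q.polarBilin w u / Q u
  have hc (u : V) (hu : Q.polarBilin w u ≠ 0) : c u ≠ 0 := div_ne_zero hu (hQ u hu)
  have hmem (u : V) (hu : Q.polarBilin w u ≠ 0) : w - c u • u ∈ nonsingularSolutions Q m := by
    have hcu : c u * Q u = polar Q w u := div_mul_cancel₀ _ (hQ u hu)
    constructor
    · rw [sub_eq_add_neg, ← neg_smul, QuadraticMap.map_add Q, QuadraticMap.map_smul,
        polar_smul_right, hw]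
      simp only [smul_eq_mul]
      linear_combination c u * hcu
    · intro h
      have hu0 : polar Q (w - c u • u) u = 0 := LinearMap.congr_fun h u
      rw [polar_sub_left, polar_smul_left, polar_self, ← hcu, smul_eq_mul, two_smul] at hu0
      refine mul_ne_zero (hc u hu) (hQ u hu) ?_
      linear_combination -hu0
  refine le_solutionDensity_of_injective hl (g := fun u ↦ (⟨w - c u • u, hmem u u.2⟩, c u))
    fun u u' h ↦ ?_
  obtain ⟨h1, h2⟩ := Prod.ext_iff.1 h
  have h1 : w - c u • (u : V) = w - c u' • (u' : V) := congrArg Subtype.val h1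
  have h2 : c u = c u' := h2
  rw [← h2] at h1
  exact Subtype.ext (smul_right_injective V (hc u u.2) (sub_right_injective h1))

theorem le_solutionDensity_nonsingularSolutions
    (h : (nonsingularSolutions Q 0).Nonempty ∨ (nonsingularSolutions Q m).Nonempty) :
    1 - 1 / (Nat.card F : ℝ) ≤ solutionDensity F (nonsingularSolutions Q m) := by
  by_cases h0 : (nonsingularSolutions Q 0).Nonempty
  · exact le_solutionDensity_nonsingularSolutions_of_zero Q h0
  · exact le_solutionDensity_nonsingularSolutions_of_not_zero Q h0 (h.resolve_left h0)

end FiniteField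

section Hensel

open QuadraticMap

variable {R F M V : Type*} [CommRing R] [Field F] [AddCommGroup M] [Module R M]
  [AddCommGroup V] [Module F V] {π : R →+* F} {φ : M →ₛₗ[π] V}
  {Q : QuadraticForm R M} {Q' : QuadraticForm F V}

lemma polar_apply_of_semilinear (hQ : ∀ x, Q' (φ x) = π (Q x)) (x y : M) :
    polar Q' (φ x) (φ y) = π (polar Q x y) := by
  simp only [polar, ← map_add, hQ, map_sub]

variable [IsLocalHom π] [Finite R]

lemma existsUnique_ker_map_add_smul_eq {n : R} {x v : M} (hx : π (Q x) = π n)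
    (hv : π (polar Q x v) ≠ 0) :
    ∃! t : RingHom.ker π, Q (x + (t : R) • v) = n := by
  have hexpand (t : R) : Q (x + t • v) = Q x + t * polar Q x v + t * t * Q v := by
    rw [QuadraticMap.map_add Q, polar_smul_right, QuadraticMap.map_smul]
    simp only [smul_eq_mul]; ring
  let f (t : RingHom.ker π) : RingHom.ker π := ⟨Q (x + (t : R) • v) - n, by
    rw [RingHom.mem_ker, hexpand]
    simp [RingHom.mem_ker.1 t.2, hx]⟩
  have hf : Function.Injective f := fun s t hst ↦ by
    have hst : Q (x + (s : R) • v) - n = Q (x + (t : R) • v) - n := congrArg Subtype.val hst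
    have hunit : IsUnit (polar Q x v + (s + t) * Q v) := by
      refine IsUnit.of_map π _ (isUnit_iff_ne_zero.2 ?_)
      simpa [RingHom.mem_ker.1 s.2, RingHom.mem_ker.1 t.2] using hv
    rw [hexpand, hexpand] at hst
    refine Subtype.ext (sub_eq_zero.1 (hunit.mul_left_eq_zero.1 ?_))
    linear_combination hst
  have hbij := Finite.injective_iff_bijective.1 hf
  have hzero (t) : f t = 0 ↔ Q (x + (t : R) • v) = n := by
    rw [Subtype.ext_iff, ← sub_eq_zero (b := n)]; rfl
  simpa only [hzero] using hbij.existsUnique 0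

lemma ncard_fiber_inter_setOf_eq (hφ : Function.Surjective φ)
    (hQ : ∀ x, Q' (φ x) = π (Q x)) {n : R} {a : V} (ha : a ∈ nonsingularSolutions Q' (π n)) :
    ({x | Q x = n} ∩ φ ⁻¹' {a}).ncard * Nat.card (RingHom.ker π) = (φ ⁻¹' {a}).ncard := by
  obtain ⟨w, hw⟩ := DFunLike.ne_iff.1 ha.2
  obtain ⟨v, rfl⟩ := hφ w
  have hunique (x : M) (hx : φ x = a) : ∃! t : RingHom.ker π, Q (x + (t : R) • v) = n := by
    refine existsUnique_ker_map_add_smul_eq (by rw [← hQ, hx, ha.1]) ?_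
    rw [← polar_apply_of_semilinear hQ, hx]
    exact hw
  have hφv (x : M) (t : RingHom.ker π) : φ (x + (t : R) • v) = φ x := by
    simp [RingHom.mem_ker.1 t.2]
  rw [← Nat.card_coe_set_eq, ← Nat.card_prod]
  refine Nat.card_eq_of_bijective (β := ↑(φ ⁻¹' {a}))
    (fun q ↦ ⟨q.1 + (q.2 : R) • v, (hφv _ _).trans q.1.2.2⟩) ⟨?_, ?_⟩
  · rintro ⟨⟨x, hx⟩, s⟩ ⟨⟨y, hy⟩, t⟩ h
    have h : x + (s : R) • v = y + (t : R) • v := congrArg Subtype.val h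
    have hst : -s = -t := (hunique (x + (s : R) • v) ((hφv x s).trans hx.2)).unique
      (by simpa using hx.1) (by simpa [h] using hy.1)
    obtain rfl := neg_injective hst
    exact Prod.ext (Subtype.ext (add_right_cancel h)) rfl
  · rintro ⟨y, hy⟩
    obtain ⟨t, ht, -⟩ := hunique y hy
    exact ⟨(⟨y + (t : R) • v, ht, (hφv y t).trans hy⟩, -t), Subtype.ext (by simp)⟩

theorem solutionDensity_inter_preimage_nonsingularSolutions [Finite M]
    (hπ : Function.Surjective π) (hφ : Function.Surjective φ)
    (hQ : ∀ x, Q' (φ x) = π (Q x)) (n : R) :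
    solutionDensity R ({x | Q x = n} ∩ φ ⁻¹' nonsingularSolutions Q' (π n)) =
      solutionDensity F (nonsingularSolutions Q' (π n)) := by
  have := Finite.of_surjective π hπ
  have := Finite.of_surjective φ hφ
  have hR : Nat.card R = Nat.card (RingHom.ker π) * Nat.card F :=
    card_eq_card_ker_mul_of_surjective (φ := (π : R →+ F)) hπ
  have hM : Nat.card M = _ := card_eq_card_ker_mul_of_surjective (φ := φ.toAddMonoidHom) hφ
  have hfiber (a : V) (ha : a ∈ nonsingularSolutions Q' (π n)) :
      (({x | Q x = n} ∩ φ ⁻¹' nonsingularSolutions Q' (π n)) ∩ φ ⁻¹' {a}).ncard *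
        Nat.card (RingHom.ker π) = Nat.card φ.toAddMonoidHom.ker := by
    have hpre : (φ ⁻¹' {a}).ncard = _ :=
      ncard_preimage_of_surjective (φ := φ.toAddMonoidHom) hφ {a}
    rw [Set.inter_assoc, ← Set.preimage_inter, Set.inter_singleton_of_mem ha,
      ncard_fiber_inter_setOf_eq hφ hQ ha, hpre, Set.ncard_singleton, mul_one]
  have hcount : (_ : ℝ) = _ :=
    congrArg Nat.cast (ncard_mul_eq_mul_ncard_of_fiber (fun x hx ↦ hx.2) hfiber)
  push_cast at hcount
  have hker : (0 : ℝ) < Nat.card φ.toAddMonoidHom.ker := Nat.cast_pos.2 Nat.card_pos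
  have hV : (0 : ℝ) < Nat.card V := Nat.cast_pos.2 Nat.card_pos
  rw [solutionDensity, solutionDensity, hR, hM, Nat.cast_mul, Nat.cast_mul,
    div_eq_div_iff (by positivity) hV.ne']
  linear_combination Nat.card F * Nat.card V * hcount

end Hensel

section WeightedSumSquares

open QuadraticMap

variable {ι R : Type*} [Fintype ι] [CommRing R]

lemma map_weightedSumSquares {S : Type*} [CommRing S] (f : R →+* S) (d x : ι → R) :
    f (weightedSumSquares R d x) = weightedSumSquares S (f ∘ d) (f ∘ x) := by
  simp [weightedSumSquares_apply]

lemma weightedSumSquares_mul_left {d d' s : ι → R} {c : R} (h : ∀ i, d i * s i ^ 2 = c * d' i)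
    (x : ι → R) : weightedSumSquares R d (s * x) = c * weightedSumSquares R d' x := by
  simp only [weightedSumSquares_apply, smul_eq_mul, Pi.mul_apply, Finset.mul_sum]
  exact Finset.sum_congr rfl fun i _ ↦ by linear_combination x i ^ 2 * h i

lemma polar_weightedSumSquares (d x y : ι → R) :
    polar (weightedSumSquares R d) x y = 2 * ∑ i, d i * x i * y i := by
  simp only [polar, weightedSumSquares_apply, ← Finset.sum_sub_distrib, Finset.mul_sum, smul_eq_mul,
    Pi.add_apply]
  exact Finset.sum_congr rfl fun i _ ↦ by ring

variable {F : Type*} [Field F]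

lemma mem_nonsingularSolutions_weightedSumSquares (hF : ringChar F ≠ 2) {d x : ι → F} {m : F} :
    x ∈ nonsingularSolutions (weightedSumSquares F d) m ↔
      weightedSumSquares F d x = m ∧ ∃ i, d i ≠ 0 ∧ x i ≠ 0 := by
  classical
  have h2 : (2 : F) ≠ 0 := Ring.two_ne_zero hF
  refine and_congr_right fun _ ↦ ⟨fun h ↦ ?_, fun ⟨i, hd, hx⟩ h ↦ ?_⟩
  · by_contra! h0
    refine h (LinearMap.ext fun y ↦ (polar_weightedSumSquares d x y).trans ?_)
    have hterm (i : ι) : d i * x i * y i = 0 := by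
      by_cases hd : d i = 0
      · simp [hd]
      · simp [h0 i hd]
    simp [hterm]
  · have hi : polar (weightedSumSquares F d) x (Pi.single i 1) = 0 :=
      LinearMap.congr_fun h (Pi.single i 1)
    rw [polar_weightedSumSquares, Finset.sum_eq_single i (by simp +contextual) (by simp)] at hi
    simp_all

lemma exists_mul_sq_add_mul_sq_add_eq_zero [Finite F] (hF : ringChar F ≠ 2) {a b : F} (ha : a ≠ 0)
    (hb : b ≠ 0) (c : F) : ∃ x y, a * x ^ 2 + b * y ^ 2 + c = 0 := by
  have := Fintype.ofFinite F
  obtain ⟨x, y, h⟩ := FiniteField.exists_root_sum_quadratic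
    (f := .C a * .X ^ 2) (g := .C b * .X ^ 2 + .C 0 * .X + .C c)
    (Polynomial.degree_C_mul_X_pow 2 ha) (Polynomial.degree_quadratic hb)
    (FiniteField.odd_card_of_char_ne_two hF)
  exact ⟨x, y, by simpa [add_assoc] using h⟩

lemma nonempty_nonsingularSolutions_of_two_lt_card [Finite F] (hF : ringChar F ≠ 2) {d : ι → F}
    {s : Finset ι} (hs : 2 < s.card) (hd : ∀ i ∈ s, d i ≠ 0) :
    (nonsingularSolutions (weightedSumSquares F d) 0).Nonempty := by
  classical
  obtain ⟨i, hi, j, hj, k, hk, hij, hik, hjk⟩ := Finset.two_lt_card.1 hs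
  obtain ⟨a, b, hab⟩ :=
    exists_mul_sq_add_mul_sq_add_eq_zero hF (hd i hi) (hd j hj) (d k)
  let v : ι → F := Pi.single i a + Pi.single j b + Pi.single k 1
  have hvi : v i = a := by simp [v, hij, hik]
  have hvj : v j = b := by simp [v, hij.symm, hjk]
  have hvk : v k = 1 := by simp [v, hik.symm, hjk.symm]
  refine ⟨v, (mem_nonsingularSolutions_weightedSumSquares hF).2
    ⟨?_, k, hd k hk, by simp [hvk]⟩⟩
  have hsupp : ∀ l ∉ ({i, j, k} : Finset ι), v l = 0 := fun l hl ↦ by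
    simp only [Finset.mem_insert, Finset.mem_singleton, not_or] at hl
    simp [v, hl]
  rw [weightedSumSquares_apply, ← Finset.sum_subset (Finset.subset_univ {i, j, k})
    fun l _ hl ↦ by simp [hsupp l hl], Finset.sum_insert (by simp [hij, hik]),
    Finset.sum_pair hjk, hvi, hvj, hvk]
  simp only [smul_eq_mul]
  linear_combination hab

end WeightedSumSquares

section Residue

variable {p : ℕ}

/-- Reduction modulo `p` on `ℤ/p^(k+1)`. -/
def residueMap (p k : ℕ) : ZMod (p ^ (k + 1)) →+* ZMod p :=
  ZMod.castHom (dvd_pow_self p k.succ_ne_zero) (ZMod p)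

/-- Reduction modulo `p^k` on `ℤ/p^(k+1)`. -/
def truncMap (p k : ℕ) : ZMod (p ^ (k + 1)) →+* ZMod (p ^ k) :=
  ZMod.castHom (pow_dvd_pow p k.le_succ) (ZMod (p ^ k))

lemma residueMap_surjective (k : ℕ) : Function.Surjective (residueMap p k) :=
  ZMod.castHom_surjective _

lemma truncMap_surjective (k : ℕ) : Function.Surjective (truncMap p k) :=
  ZMod.castHom_surjective _

variable [Fact p.Prime]

lemma toZMod_eq_zero_iff {x : ℤ_[p]} : PadicInt.toZMod x = 0 ↔ (p : ℤ_[p]) ∣ x := by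
  rw [← RingHom.mem_ker, PadicInt.ker_toZMod, PadicInt.maximalIdeal_eq_span_p,
    Ideal.mem_span_singleton]

lemma residueMap_comp_toZModPow (k : ℕ) :
    (residueMap p k).comp (PadicInt.toZModPow (k + 1)) = PadicInt.toZMod := by
  ext x
  obtain ⟨c, hc⟩ := Ideal.mem_span_singleton.1
    (PadicInt.maximalIdeal_eq_span_p (p := p) ▸ PadicInt.sub_zmodRepr_mem x)
  rw [sub_eq_iff_eq_add.1 hc]
  simp

lemma truncMap_comp_toZModPow (k : ℕ) :
    (truncMap p k).comp (PadicInt.toZModPow (k + 1)) = PadicInt.toZModPow k :=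
  PadicInt.zmod_cast_comp_toZModPow k (k + 1) k.le_succ

instance (k : ℕ) : IsLocalHom (residueMap p k) where
  map_nonunit x hx := by
    obtain ⟨a, rfl⟩ := ZMod.natCast_zmod_surjective x
    rw [map_natCast, isUnit_iff_ne_zero, Ne, ZMod.natCast_eq_zero_iff] at hx
    rw [ZMod.isUnit_iff_coprime]
    exact Nat.Coprime.pow_right _ (((Fact.out : p.Prime).coprime_iff_not_dvd).2 hx).symm

lemma p_mul_eq_zero_iff_truncMap_eq_zero {k : ℕ} {x : ZMod (p ^ (k + 1))} :
    (p : ZMod (p ^ (k + 1))) * x = 0 ↔ truncMap p k x = 0 := by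
  obtain ⟨a, rfl⟩ := ZMod.natCast_zmod_surjective x
  rw [map_natCast, ← Nat.cast_mul, ZMod.natCast_eq_zero_iff, ZMod.natCast_eq_zero_iff, pow_succ',
    Nat.mul_dvd_mul_iff_left (Fact.out : p.Prime).pos]

lemma residueMap_eq_zero_iff_dvd {k : ℕ} {x : ZMod (p ^ (k + 1))} :
    residueMap p k x = 0 ↔ (p : ZMod (p ^ (k + 1))) ∣ x := by
  refine ⟨fun h ↦ ?_, fun ⟨y, hy⟩ ↦ by simp [hy]⟩
  obtain ⟨a, rfl⟩ := ZMod.natCast_zmod_surjective x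
  rw [map_natCast, ZMod.natCast_eq_zero_iff] at h
  exact_mod_cast Nat.cast_dvd_cast h

lemma ncard_setOf_p_mul_eq_zero (k : ℕ) :
    {x : ZMod (p ^ (k + 1)) | p * x = 0}.ncard = p := by
  have hker := card_eq_card_ker_mul_of_surjective
    (φ := (truncMap p k : ZMod (p ^ (k + 1)) →+ ZMod (p ^ k))) (truncMap_surjective k)
  rw [Nat.card_zmod, Nat.card_zmod] at hker
  simp only [p_mul_eq_zero_iff_truncMap_eq_zero]
  exact (Nat.eq_of_mul_eq_mul_right (Nat.pow_pos (Fact.out : p.Prime).pos)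
    ((pow_succ' p k).symm.trans hker)).symm

lemma ringChar_zmod_ne_two (hp : p ≠ 2) : ringChar (ZMod p) ≠ 2 := by
  rwa [ZMod.ringChar_zmod_n]

end Residue

section DiagonalDensity

open QuadraticMap

variable {ι : Type*} [Fintype ι] {p : ℕ} [Fact p.Prime]

/-- The solutions modulo `p^k` of `∑ dᵢ xᵢ² = n`. -/
def diagonalSolutions (d : ι → ℤ_[p]) (n : ℤ_[p]) (k : ℕ) : Set (ι → ZMod (p ^ k)) :=
  {x | weightedSumSquares (ZMod (p ^ k)) (PadicInt.toZModPow k ∘ d) x = PadicInt.toZModPow k n}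

/-- The solutions modulo `p` of `∑ dᵢ xᵢ² = n` which Hensel's lemma lifts. -/
def residualSolutions (d : ι → ℤ_[p]) (n : ℤ_[p]) : Set (ι → ZMod p) :=
  nonsingularSolutions (weightedSumSquares (ZMod p) (PadicInt.toZMod ∘ d)) (PadicInt.toZMod n)

/-- Approximation modulo `p^k` of the local density of `∑ dᵢ xᵢ²` at `n`. -/
noncomputable def diagonalDensity (d : ι → ℤ_[p]) (n : ℤ_[p]) (k : ℕ) : ℝ :=
  solutionDensity (ZMod (p ^ k)) (diagonalSolutions d n k)

/-- Contribution of the nonsingular solutions modulo `p` to the local density of `∑ dᵢ xᵢ²`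
at `n`. -/
noncomputable def residualDensity (d : ι → ℤ_[p]) (n : ℤ_[p]) : ℝ :=
  solutionDensity (ZMod p) (residualSolutions d n)

variable {d : ι → ℤ_[p]} {n : ℤ_[p]} {k : ℕ}

lemma solutionDensity_inter_preimage_residualSolutions (d : ι → ℤ_[p]) (n : ℤ_[p]) (k : ℕ) :
    solutionDensity (ZMod (p ^ (k + 1)))
        (diagonalSolutions d n (k + 1) ∩ (residueMap p k ∘ ·) ⁻¹' residualSolutions d n) =
      residualDensity d n := by
  let φ : (ι → ZMod (p ^ (k + 1))) →ₛₗ[residueMap p k] (ι → ZMod p) :=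
    { toFun := (residueMap p k ∘ ·)
      map_add' := fun x y ↦ funext fun i ↦ map_add _ (x i) (y i)
      map_smul' := fun c x ↦ funext fun i ↦ map_mul _ c (x i) }
  have hlift (x : ℤ_[p]) : residueMap p k (PadicInt.toZModPow (k + 1) x) = PadicInt.toZMod x :=
    RingHom.congr_fun (residueMap_comp_toZModPow k) x
  have hd : residueMap p k ∘ PadicInt.toZModPow (k + 1) ∘ d = PadicInt.toZMod ∘ d :=
    funext fun i ↦ hlift (d i)
  have := solutionDensity_inter_preimage_nonsingularSolutions (φ := φ)
    (Q := weightedSumSquares _ (PadicInt.toZModPow (k + 1) ∘ d))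
    (Q' := weightedSumSquares _ (PadicInt.toZMod ∘ d)) (residueMap_surjective k)
    (residueMap_surjective k).comp_left
    (fun x ↦ by rw [map_weightedSumSquares, hd]; rfl) (PadicInt.toZModPow (k + 1) n)
  rw [hlift] at this
  exact this

/-- The solutions modulo `p^(k+1)` of `∑ dᵢ xᵢ² = n` whose reduction modulo `p` is singular. -/
def singularSolutions (d : ι → ℤ_[p]) (n : ℤ_[p]) (k : ℕ) : Set (ι → ZMod (p ^ (k + 1))) :=
  diagonalSolutions d n (k + 1) \ (residueMap p k ∘ ·) ⁻¹' residualSolutions d n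

lemma diagonalDensity_succ (d : ι → ℤ_[p]) (n : ℤ_[p]) (k : ℕ) :
    diagonalDensity d n (k + 1) =
      residualDensity d n + solutionDensity (ZMod (p ^ (k + 1))) (singularSolutions d n k) := by
  rw [← solutionDensity_inter_preimage_residualSolutions d n k]
  exact (solutionDensity_inter_add_diff _ _ _).symm

lemma residualDensity_le_diagonalDensity_succ (d : ι → ℤ_[p]) (n : ℤ_[p]) (k : ℕ) :
    residualDensity d n ≤ diagonalDensity d n (k + 1) := by
  rw [← solutionDensity_inter_preimage_residualSolutions d n k]
  exact solutionDensity_mono _ Set.inter_subset_left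

lemma weightedSumSquares_residueMap_comp {x : ι → ZMod (p ^ (k + 1))}
    (hx : x ∈ diagonalSolutions d n (k + 1)) :
    weightedSumSquares (ZMod p) (PadicInt.toZMod ∘ d) (residueMap p k ∘ x) = PadicInt.toZMod n := by
  have h := congrArg (residueMap p k) hx
  rw [map_weightedSumSquares, ← RingHom.comp_apply, residueMap_comp_toZModPow] at h
  rw [← h, ← residueMap_comp_toZModPow k]
  rfl

variable (hp : p ≠ 2)
include hp

lemma mem_residualSolutions_iff {x : ι → ZMod p} :
    x ∈ residualSolutions d n ↔
      weightedSumSquares (ZMod p) (PadicInt.toZMod ∘ d) x = PadicInt.toZMod n ∧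
        ∃ i, ¬(p : ℤ_[p]) ∣ d i ∧ x i ≠ 0 := by
  rw [residualSolutions, mem_nonsingularSolutions_weightedSumSquares (ringChar_zmod_ne_two hp)]
  simp only [Function.comp_apply, Ne, toZMod_eq_zero_iff]

lemma mem_residualSolutions_of_not_dvd (hn : ¬(p : ℤ_[p]) ∣ n) {x : ι → ZMod p}
    (hx : weightedSumSquares (ZMod p) (PadicInt.toZMod ∘ d) x = PadicInt.toZMod n) :
    x ∈ residualSolutions d n :=
  mem_nonsingularSolutions_of_ne_zero (ringChar_zmod_ne_two hp) hx (toZMod_eq_zero_iff.not.2 hn)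

lemma mem_singularSolutions_iff {x : ι → ZMod (p ^ (k + 1))} :
    x ∈ singularSolutions d n k ↔ x ∈ diagonalSolutions d n (k + 1) ∧
      ∀ i, ¬(p : ℤ_[p]) ∣ d i → (p : ZMod (p ^ (k + 1))) ∣ x i := by
  refine and_congr_right fun hx ↦ ?_
  rw [Set.mem_preimage, mem_residualSolutions_iff hp]
  simp only [weightedSumSquares_residueMap_comp hx, true_and, not_exists, not_and, not_not,
    Function.comp_apply, Ne, residueMap_eq_zero_iff_dvd]

lemma diagonalDensity_succ_of_not_dvd (hn : ¬(p : ℤ_[p]) ∣ n) :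
    diagonalDensity d n (k + 1) = residualDensity d n := by
  have hempty : singularSolutions d n k = ∅ := Set.sdiff_eq_empty.2 fun x hx ↦
    mem_residualSolutions_of_not_dvd hp hn (weightedSumSquares_residueMap_comp hx)
  rw [diagonalDensity_succ, hempty]
  simp [solutionDensity]

end DiagonalDensity

section Descent

open QuadraticMap

variable {ι : Type*} {p : ℕ} [Fact p.Prime]

open Classical in
/-- The indices `i` at which the coefficient `dᵢ` is a `p`-adic unit. -/
noncomputable def unitIndices [Fintype ι] (d : ι → ℤ_[p]) : Finset ι := {i | ¬(p : ℤ_[p]) ∣ d i}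

open Classical in
/-- The scaling vector `s` for which multiplication by `s` parametrizes the `x` with `p ∣ dᵢ xᵢ`
for all `i`. -/
noncomputable def descentScale (d : ι → ℤ_[p]) (i : ι) : ℤ_[p] :=
  if (p : ℤ_[p]) ∣ d i then 1 else p

open Classical in
/-- The coefficients of the diagonal form `y ↦ (1 / p) ∑ dᵢ (sᵢ yᵢ)²`, where `s` is
`descentScale d`. -/
noncomputable def descentWeight (d : ι → ℤ_[p]) (i : ι) : ℤ_[p] :=
  if h : (p : ℤ_[p]) ∣ d i then h.choose else p * d i

lemma mul_descentScale_sq (d : ι → ℤ_[p]) (i : ι) :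
    d i * descentScale d i ^ 2 = p * descentWeight d i := by
  unfold descentScale descentWeight
  split_ifs with h
  · rw [one_pow, mul_one]; exact h.choose_spec
  · ring

variable {d : ι → ℤ_[p]} {n : ℤ_[p]}

lemma exists_eq_descentScale_mul {R : Type*} [CommRing R] (f : ℤ_[p] →+* R) {x : ι → R}
    (hx : ∀ i, ¬(p : ℤ_[p]) ∣ d i → (p : R) ∣ x i) :
    ∃ y, (f ∘ descentScale d) * y = x := by
  have hdvd (i : ι) : f (descentScale d i) ∣ x i := by
    unfold descentScale
    split_ifs with h
    · simp
    · simpa using hx i h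
  choose y hy using hdvd
  exact ⟨y, funext fun i ↦ (hy i).symm⟩

variable [Fintype ι]

lemma ncard_setOf_toZModPow_descentScale_mul_eq_zero (d : ι → ℤ_[p]) (k : ℕ) :
    {x : ι → ZMod (p ^ (k + 1)) | (PadicInt.toZModPow (k + 1) ∘ descentScale d) * x = 0}.ncard =
      p ^ (unitIndices d).card := by
  classical
  have hpi : {x : ι → ZMod (p ^ (k + 1)) |
      (PadicInt.toZModPow (k + 1) ∘ descentScale d) * x = 0} =
      Set.univ.pi fun i ↦ {a | PadicInt.toZModPow (k + 1) (descentScale d i) * a = 0} := by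
    ext x
    simp [funext_iff]
  have hcoord (i : ι) : {a | PadicInt.toZModPow (k + 1) (descentScale d i) * a = 0}.ncard =
      if i ∈ unitIndices d then p else 1 := by
    by_cases hi : (p : ℤ_[p]) ∣ d i
    · simp [unitIndices, descentScale, hi]
    · simp [unitIndices, descentScale, hi, ncard_setOf_p_mul_eq_zero]
  rw [hpi, ← Nat.card_coe_set_eq, Nat.card_congr (Equiv.Set.univPi _), Nat.card_pi]
  simp only [Nat.card_coe_set_eq, hcoord]
  simp

variable (hp : p ≠ 2)
include hp

lemma descentScale_mul_mem_singularSolutions_iff {k : ℕ} {x : ι → ZMod (p ^ (k + 1))} :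
    (PadicInt.toZModPow (k + 1) ∘ descentScale d) * x ∈ singularSolutions d (p * n) k ↔
      truncMap p k ∘ x ∈ diagonalSolutions (descentWeight d) n k := by
  let f : ℤ_[p] →+* ZMod (p ^ (k + 1)) := PadicInt.toZModPow (k + 1)
  have hscale : weightedSumSquares _ (f ∘ d) ((f ∘ descentScale d) * x) =
      p * weightedSumSquares _ (f ∘ descentWeight d) x :=
    weightedSumSquares_mul_left (fun i ↦ by
      simpa using congrArg f (mul_descentScale_sq d i)) x
  have hdvd (i : ι) (hi : ¬(p : ℤ_[p]) ∣ d i) :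
      (p : ZMod (p ^ (k + 1))) ∣ ((f ∘ descentScale d) * x) i := by
    simp [descentScale, hi]
  have htrunc : truncMap p k (weightedSumSquares _ (f ∘ descentWeight d) x - f n) =
      weightedSumSquares _ (PadicInt.toZModPow k ∘ descentWeight d) (truncMap p k ∘ x) -
        PadicInt.toZModPow k n := by
    rw [map_sub, map_weightedSumSquares, ← truncMap_comp_toZModPow]
    rfl
  rw [mem_singularSolutions_iff hp, and_iff_left hdvd, diagonalSolutions, diagonalSolutions,
    Set.mem_ofPred_eq, Set.mem_ofPred_eq, hscale, ← sub_eq_zero, map_mul, map_natCast, ← mul_sub,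
    p_mul_eq_zero_iff_truncMap_eq_zero, htrunc, sub_eq_zero]

theorem solutionDensity_singularSolutions (d : ι → ℤ_[p]) (n : ℤ_[p]) (k : ℕ) :
    solutionDensity (ZMod (p ^ (k + 1))) (singularSolutions d (p * n) k) =
      p / p ^ (unitIndices d).card * diagonalDensity (descentWeight d) n k := by
  let f := AddMonoidHom.mulLeft (PadicInt.toZModPow (k + 1) ∘ descentScale d)
  let g := (truncMap p k : ZMod (p ^ (k + 1)) →+ ZMod (p ^ k)).compLeft ι
  have hg : Function.Surjective g := (truncMap_surjective k).comp_left
  have hf : Nat.card f.ker = p ^ (unitIndices d).card :=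
    ncard_setOf_toZModPow_descentScale_mul_eq_zero d k
  have hrange : singularSolutions d (p * n) k ⊆ Set.range f := fun x hx ↦
    exists_eq_descentScale_mul _ ((mem_singularSolutions_iff hp).1 hx).2
  have hpre : f ⁻¹' singularSolutions d (p * n) k =
      g ⁻¹' diagonalSolutions (descentWeight d) n k :=
    Set.ext fun x ↦ descentScale_mul_mem_singularSolutions_iff hp
  have hcount : p ^ (unitIndices d).card * (singularSolutions d (p * n) k).ncard =
      Nat.card g.ker * (diagonalSolutions (descentWeight d) n k).ncard := by
    rw [← ncard_preimage_of_surjective hg, ← hpre, ncard_preimage_addMonoidHom,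
      Set.inter_eq_left.2 hrange, hf]
  have hcount : (_ : ℝ) = _ := congrArg Nat.cast hcount
  have hppos : (0 : ℝ) < p := Nat.cast_pos.2 (Fact.out : p.Prime).pos
  have hker : (0 : ℝ) < Nat.card g.ker := Nat.cast_pos.2 Nat.card_pos
  have hcard : (0 : ℝ) < Nat.card (ι → ZMod (p ^ k)) := Nat.cast_pos.2 Nat.card_pos
  rw [diagonalDensity, solutionDensity, solutionDensity, Nat.card_zmod, Nat.card_zmod,
    card_eq_card_ker_mul_of_surjective hg]
  push_cast at hcount ⊢
  field_simp
  linear_combination (p : ℝ) ^ (k + 1) * hcount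

end Descent

section LowerBound

open QuadraticMap Filter Topology

variable {ι : Type*} [Fintype ι] {p : ℕ} [Fact p.Prime] {d : ι → ℤ_[p]} {n : ℤ_[p]}

lemma toZMod_comp_mem_residualSolutions_iff (hp : p ≠ 2) {x : ι → ℤ_[p]}
    (hx : weightedSumSquares ℤ_[p] d x = n) :
    PadicInt.toZMod ∘ x ∈ residualSolutions d n ↔
      ∃ i, ¬(p : ℤ_[p]) ∣ d i ∧ ¬(p : ℤ_[p]) ∣ x i := by
  simp only [mem_residualSolutions_iff hp, ← map_weightedSumSquares, hx, true_and,
    Function.comp_apply, Ne, toZMod_eq_zero_iff]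

lemma residualSolutions_zero_nonempty_of_two_lt_card (hp : p ≠ 2)
    (hd : 2 < (unitIndices d).card) : (residualSolutions d 0).Nonempty := by
  rw [residualSolutions, map_zero]
  refine nonempty_nonsingularSolutions_of_two_lt_card (ringChar_zmod_ne_two hp) hd fun i hi ↦ ?_
  simpa [unitIndices, toZMod_eq_zero_iff] using hi

lemma le_residualDensity
    (h : (residualSolutions d 0).Nonempty ∨ (residualSolutions d n).Nonempty) :
    1 - 1 / (p : ℝ) ≤ residualDensity d n := by
  simp only [residualSolutions, map_zero] at h
  simpa only [residualDensity, residualSolutions, Nat.card_zmod] using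
    le_solutionDensity_nonsingularSolutions _ h

lemma diagonalDensity_p_mul_succ (hp : p ≠ 2) (d : ι → ℤ_[p]) (n : ℤ_[p]) (k : ℕ) :
    diagonalDensity d (p * n) (k + 1) = residualDensity d (p * n) +
      p / p ^ (unitIndices d).card * diagonalDensity (descentWeight d) n k := by
  rw [diagonalDensity_succ, solutionDensity_singularSolutions hp]

theorem exists_tendsto_diagonalDensity (hp : p ≠ 2) (d : ι → ℤ_[p]) (hn : n ≠ 0) :
    ∃ β, Tendsto (diagonalDensity d n) atTop (𝓝 β) := by
  obtain ⟨u, hnu, hu⟩ :=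
    (FiniteMultiplicity.of_prime_left PadicInt.prime_p hn).exists_eq_pow_mul_and_not_dvd
  generalize multiplicity (p : ℤ_[p]) n = a at hnu
  subst hnu
  clear hn
  induction a generalizing d with
  | zero =>
    refine ⟨residualDensity d u, (tendsto_add_atTop_iff_nat 1).1 ?_⟩
    simp only [pow_zero, one_mul, diagonalDensity_succ_of_not_dvd hp hu, tendsto_const_nhds]
  | succ a ih =>
    obtain ⟨β, hβ⟩ := ih (descentWeight d)
    have hlim := (hβ.const_mul (p / p ^ (unitIndices d).card : ℝ)).const_add
      (residualDensity d (p * (p ^ a * u)))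
    refine ⟨_, (tendsto_add_atTop_iff_nat 1).1 (hlim.congr fun k ↦ ?_)⟩
    rw [pow_succ', mul_assoc, diagonalDensity_p_mul_succ hp]

lemma weightedSumSquares_descentScale_mul (d y : ι → ℤ_[p]) :
    weightedSumSquares ℤ_[p] d (descentScale d * y) =
      p * weightedSumSquares ℤ_[p] (descentWeight d) y :=
  weightedSumSquares_mul_left (mul_descentScale_sq d) y

lemma le_diagonalDensity_p_mul_succ (hp : p ≠ 2) (hd : (unitIndices d).card ≤ 2) {k : ℕ} {c : ℝ}
    (h : c ≤ diagonalDensity (descentWeight d) n k) (hc : 0 ≤ c) :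
    c / p ≤ diagonalDensity d (p * n) (k + 1) := by
  have hpos : (0 : ℝ) < p := Nat.cast_pos.2 (Fact.out : p.Prime).pos
  have hone : (1 : ℝ) ≤ p := Nat.one_le_cast.2 (Fact.out : p.Prime).one_le
  have hres : 0 ≤ residualDensity d (p * n) := by
    unfold residualDensity solutionDensity; positivity
  calc c / p = p / p ^ 2 * c := by field_simp
    _ ≤ p / p ^ (unitIndices d).card * diagonalDensity (descentWeight d) n k := by gcongr
    _ ≤ diagonalDensity d (p * n) (k + 1) := by
        rw [diagonalDensity_p_mul_succ hp]; exact le_add_of_nonneg_left hres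

lemma exists_descent_of_residualSolutions_eq_empty (hp : p ≠ 2) (h0 : residualSolutions d 0 = ∅)
    (hn : residualSolutions d n = ∅) {z x : ι → ℤ_[p]} (hz : weightedSumSquares ℤ_[p] d z = 0)
    (hx : weightedSumSquares ℤ_[p] d x = n) :
    ∃ z' x' : ι → ℤ_[p], ∃ n' : ℤ_[p], descentScale d * z' = z ∧ n = p * n' ∧
      weightedSumSquares ℤ_[p] (descentWeight d) z' = 0 ∧
      weightedSumSquares ℤ_[p] (descentWeight d) x' = n' := by
  have hfactor {m : ℤ_[p]} {v : ι → ℤ_[p]} (hm : residualSolutions d m = ∅)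
      (hv : weightedSumSquares ℤ_[p] d v = m) : ∃ v', descentScale d * v' = v := by
    refine exists_eq_descentScale_mul (RingHom.id _) fun i hi ↦ ?_
    by_contra hvi
    exact hm.subset ((toZMod_comp_mem_residualSolutions_iff hp hv).2 ⟨i, hi, hvi⟩)
  obtain ⟨z', rfl⟩ := hfactor h0 hz
  obtain ⟨x', rfl⟩ := hfactor hn hx
  rw [weightedSumSquares_descentScale_mul] at hz hx
  exact ⟨z', x', _, rfl, hx.symm,
    (mul_eq_zero.1 hz).resolve_left PadicInt.prime_p.ne_zero, rfl⟩

lemma eventually_le_diagonalDensity_of_nonempty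
    (h : (residualSolutions d 0).Nonempty ∨ (residualSolutions d n).Nonempty) :
    ∀ᶠ k in atTop, 1 - 1 / (p : ℝ) ≤ diagonalDensity d n k := by
  filter_upwards [eventually_ge_atTop 1] with k hk
  obtain ⟨k, rfl⟩ := Nat.exists_eq_add_of_le' hk
  exact (le_residualDensity h).trans (residualDensity_le_diagonalDensity_succ d n k)

theorem eventually_le_diagonalDensity (hp : p ≠ 2) {z x : ι → ℤ_[p]} {i : ι} {M : ℕ}
    (hz : weightedSumSquares ℤ_[p] d z = 0) (hzi : ¬(p : ℤ_[p]) ∣ z i)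
    (hdi : ¬(p : ℤ_[p]) ^ (M + 1) ∣ d i) (hx : weightedSumSquares ℤ_[p] d x = n) :
    ∀ᶠ k in atTop, (1 - 1 / (p : ℝ)) / p ^ M ≤ diagonalDensity d n k := by
  have hone : (1 : ℝ) ≤ p := Nat.one_le_cast.2 (Fact.out : p.Prime).one_le
  have hpos : 0 ≤ 1 - 1 / (p : ℝ) := sub_nonneg.2 (div_le_one_of_le₀ hone p.cast_nonneg)
  induction M generalizing d n z x with
  | zero =>
    have hne : (residualSolutions d 0).Nonempty :=
      ⟨_, (toZMod_comp_mem_residualSolutions_iff hp hz).2 ⟨i, by simpa using hdi, hzi⟩⟩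
    simpa only [pow_zero, div_one] using eventually_le_diagonalDensity_of_nonempty (.inl hne)
  | succ M ih =>
    by_cases h : (residualSolutions d 0).Nonempty ∨ (residualSolutions d n).Nonempty
    · filter_upwards [eventually_le_diagonalDensity_of_nonempty h] with k hk
      exact (div_le_self hpos (one_le_pow₀ hone)).trans hk
    simp only [not_or, Set.not_nonempty_iff_eq_empty] at h
    have hcard : (unitIndices d).card ≤ 2 := not_lt.1 fun hd ↦
      (residualSolutions_zero_nonempty_of_two_lt_card hp hd).ne_empty h.1
    have hpd : (p : ℤ_[p]) ∣ d i := by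
      by_contra hi
      exact h.1.subset ((toZMod_comp_mem_residualSolutions_iff hp hz).2 ⟨i, hi, hzi⟩)
    obtain ⟨z', x', n', rfl, rfl, hz', hx'⟩ :=
      exists_descent_of_residualSolutions_eq_empty hp h.1 h.2 hz hx
    have hscale : descentScale d i = 1 := if_pos hpd
    have hweight : d i = p * descentWeight d i := by
      simpa [hscale] using mul_descentScale_sq d i
    rw [Pi.mul_apply, hscale, one_mul] at hzi
    rw [hweight, pow_succ', mul_dvd_mul_iff_left PadicInt.prime_p.ne_zero] at hdi
    rw [← map_add_atTop_eq_nat 1, eventually_map, pow_succ, ← div_div]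
    filter_upwards [ih hz' hzi hdi hx'] with k hk
    exact le_diagonalDensity_p_mul_succ hp hcard hk (by positivity)

end LowerBound

section Diagonalization

variable {R : Type*} [CommRing R] [IsDomain R] [ValuationRing R]

lemma exists_mem_forall_mem_dvd [WfDvdMonoid R] {S : Set R} (hS : S.Nonempty) :
    ∃ a ∈ S, ∀ b ∈ S, a ∣ b := by
  obtain ⟨a, ha, hmin⟩ := wellFounded_dvdNotUnit.has_min S hS
  refine ⟨a, ha, fun b hb ↦ ?_⟩
  by_contra hab
  have hba : b ∣ a := (ValuationRing.dvd_total a b).resolve_left hab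
  exact hmin b hb (dvdNotUnit_of_dvd_of_not_dvd hba hab)

variable {M : Type*} [AddCommGroup M] [Module R M] {B : LinearMap.BilinForm R M}

lemma exists_forall_apply_self_dvd [WfDvdMonoid R] (h2 : IsUnit (2 : R)) (hB : B.IsSymm) :
    ∃ v, ∀ x y, B v v ∣ B x y := by
  obtain ⟨_, ⟨v, rfl⟩, hv⟩ := exists_mem_forall_mem_dvd (Set.range_nonempty fun x ↦ B x x)
  have hv (x : M) : B v v ∣ B x x := hv _ ⟨x, rfl⟩
  refine ⟨v, fun x y ↦ h2.dvd_mul_left.1 ?_⟩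
  have hpolar : 2 * B x y = B (x + y) (x + y) - B x x - B y y := by
    simp only [map_add, LinearMap.add_apply, hB.eq y x]
    ring
  rw [hpolar]
  exact dvd_sub (dvd_sub (hv _) (hv _)) (hv _)

variable [IsPrincipalIdealRing R]

theorem exists_basis_isOrthoᵢ [Module.Free R M] [Module.Finite R M] (h2 : IsUnit (2 : R))
    (hB : B.IsSymm) {n : ℕ} (hn : Module.finrank R M = n) :
    ∃ b : Module.Basis (Fin n) R M, B.IsOrthoᵢ b := by
  induction n generalizing M with
  | zero => exact ⟨Module.finBasisOfFinrankEq R M hn, fun i ↦ i.elim0⟩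
  | succ n ih =>
    obtain ⟨v, hv⟩ := exists_forall_apply_self_dvd h2 hB
    by_cases hv0 : B v v = 0
    · have hB0 (x y : M) : B x y = 0 := zero_dvd_iff.1 (hv0 ▸ hv x y)
      exact ⟨Module.finBasisOfFinrankEq R M hn, fun i j _ ↦ hB0 _ _⟩
    let K : Submodule R M := LinearMap.ker (B v)
    have hli (c : R) (x : M) (hx : x ∈ K) (hc : c • v + x = 0) : c = 0 := by
      have := congrArg (B v) hc
      rw [map_add, map_smul, LinearMap.mem_ker.1 hx, add_zero, map_zero, smul_eq_mul] at this
      exact (mul_eq_zero.1 this).resolve_right hv0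
    have hsp (x : M) : ∃ c : R, x + c • v ∈ K := by
      obtain ⟨c, hc⟩ := hv v x
      refine ⟨-c, LinearMap.mem_ker.2 ?_⟩
      rw [map_add, map_smul, hc, smul_eq_mul]
      ring
    have hK : Module.finrank R K = n := by
      have := Module.finrank_eq_card_basis
        (Module.Basis.mkFinCons v (Module.finBasis R K) hli hsp)
      rw [hn, Fintype.card_fin] at this
      exact (Nat.succ_injective this).symm
    obtain ⟨b, hb⟩ := ih (B := B.restrict K) (hB.restrict K) hK
    refine ⟨Module.Basis.mkFinCons v b hli hsp, ?_⟩
    rw [Module.Basis.coe_mkFinCons]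
    intro i j hij
    cases i using Fin.cases <;> cases j using Fin.cases
    · exact absurd rfl hij
    · exact LinearMap.mem_ker.1 (b _).2
    · exact (hB.eq _ _).trans (LinearMap.mem_ker.1 (b _).2)
    · exact hb (ne_of_apply_ne _ hij)

theorem exists_transpose_mul_mul_eq_diagonal {ι : Type*} [Fintype ι] [DecidableEq ι]
    (h2 : IsUnit (2 : R)) {A : Matrix ι ι R} (hA : A.IsSymm) :
    ∃ (P : (Matrix ι ι R)ˣ) (d : ι → R), P.1.transpose * A * P = Matrix.diagonal d := by
  obtain ⟨b, hb⟩ := exists_basis_isOrthoᵢ h2 (Matrix.isSymm_toBilin'_iff_isSymm.2 hA)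
    (Module.finrank_fintype_fun_eq_card R)
  let e := Fintype.equivFin ι
  replace hb : (Matrix.toBilin' A).IsOrthoᵢ (b.reindex e.symm) := by
    rw [Module.Basis.coe_reindex]
    exact fun i j hij ↦ hb (e.injective.ne hij)
  generalize b.reindex e.symm = b at hb
  let c := Pi.basisFun R ι
  refine ⟨⟨c.toMatrix b, b.toMatrix c, c.toMatrix_mul_toMatrix_flip b,
    b.toMatrix_mul_toMatrix_flip c⟩, fun i ↦ Matrix.toBilin' A (b i) (b i), ?_⟩
  have hA : LinearMap.BilinForm.toMatrix c (Matrix.toBilin' A) = A := by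
    rw [LinearMap.BilinForm.toMatrix_basisFun, LinearMap.BilinForm.toMatrix'_toBilin']
  ext i j
  conv_lhs => rw [← hA]
  rw [LinearMap.BilinForm.toMatrix_mul_basis_toMatrix, LinearMap.BilinForm.toMatrix_apply]
  obtain rfl | hij := eq_or_ne i j
  · rw [Matrix.diagonal_apply_eq]
  · rw [Matrix.diagonal_apply_ne _ hij]
    exact hb hij

end Diagonalization

section GramMatrix

open QuadraticMap Matrix

variable {A : Matrix (Fin 4) (Fin 4) ℤ} {R S : Type*} [CommRing R] [CommRing S]

lemma map_Qval (f : R →+* S) (A : Matrix (Fin 4) (Fin 4) ℤ) (x : Fin 4 → R) :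
    f (Qval A x) = Qval A (f ∘ x) := by
  simp [Qval]

lemma Qval_smul (A : Matrix (Fin 4) (Fin 4) ℤ) (c : R) (x : Fin 4 → R) :
    Qval A (c • x) = c ^ 2 * Qval A x := by
  simp only [Qval, Pi.smul_apply, smul_eq_mul, mul_add, Finset.mul_sum]
  congr 1
  · exact Finset.sum_congr rfl fun i _ ↦ by ring
  · exact Finset.sum_congr rfl fun i _ ↦ Finset.sum_congr rfl fun j _ ↦ by ring

lemma two_mul_Qval (hA : IsGram A) (x : Fin 4 → R) :
    2 * Qval A x = x ⬝ᵥ A.map Int.cast *ᵥ x := by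
  have hdiag (i : Fin 4) : 2 * (((A i i / 2 : ℤ) : R) * x i ^ 2) = x i * (A i i * x i) := by
    have : (2 : R) * (A i i / 2 : ℤ) = A i i := by
      exact_mod_cast congrArg (Int.cast : ℤ → R) (Int.mul_ediv_cancel' (hA.2 i))
    rw [← this]
    ring
  have hoff (i j : Fin 4) :
      2 * ((A i j : R) * (x i * x j)) = x i * (A i j * x j) + x j * (A j i * x i) := by
    rw [hA.1.apply i j]
    ring
  simp only [Qval, mul_add, Finset.mul_sum, hdiag, hoff, dotProduct, mulVec, Matrix.map_apply,
    Finset.sum_sum_Ioi_add_eq_sum_sum_off_diag fun i j ↦ x j * ((A j i : R) * x i)]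
  rw [← Finset.sum_add_distrib]
  exact Finset.sum_congr rfl fun i _ ↦
    (Fintype.sum_eq_add_sum_compl i fun j ↦ x i * ((A i j : R) * x j)).symm

lemma dotProduct_diagonal_mulVec {ι : Type*} [Fintype ι] [DecidableEq ι] (d x : ι → R) :
    x ⬝ᵥ diagonal d *ᵥ x = weightedSumSquares R d x := by
  simp only [dotProduct, mulVec_diagonal, weightedSumSquares_apply, smul_eq_mul]
  exact Finset.sum_congr rfl fun i _ ↦ by ring

lemma two_mul_Qval_mulVec (hA : IsGram A) {P : Matrix (Fin 4) (Fin 4) R} {d : Fin 4 → R}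
    (hP : Pᵀ * A.map Int.cast * P = diagonal d) (y : Fin 4 → R) :
    2 * Qval A (P *ᵥ y) = weightedSumSquares R d y := by
  rw [two_mul_Qval hA, ← dotProduct_diagonal_mulVec, ← hP, ← mulVec_mulVec, ← mulVec_mulVec,
    dotProduct_mulVec y, vecMul_transpose]

lemma dvd_of_transpose_mul_mul_eq_diagonal {ι : Type*} [Fintype ι] [DecidableEq ι]
    {A B : Matrix ι ι R} {P : (Matrix ι ι R)ˣ} {d : ι → R} {c : R}
    (hP : (P.1)ᵀ * A * P = diagonal d) (hAB : A * B = c • 1) (i : ι) : d i ∣ c := by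
  have hdiag : diagonal d * (P⁻¹.1 * B * (P⁻¹.1)ᵀ) = c • 1 :=
    calc diagonal d * (P⁻¹.1 * B * (P⁻¹.1)ᵀ) = (P.1)ᵀ * A * (P.1 * P⁻¹.1) * B * (P⁻¹.1)ᵀ := by
          simp only [← hP, Matrix.mul_assoc]
      _ = (P.1)ᵀ * (A * B) * (P⁻¹.1)ᵀ := by rw [P.mul_inv, Matrix.mul_one, Matrix.mul_assoc (P.1)ᵀ]
      _ = c • (P⁻¹.1 * P.1)ᵀ := by rw [hAB, transpose_mul]; simp
      _ = c • 1 := by rw [P.inv_mul, transpose_one]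
  have hi : d i * (P⁻¹.1 * B * (P⁻¹.1)ᵀ) i i = (c • (1 : Matrix ι ι R)) i i := by
    rw [← diagonal_mul, hdiag]
  exact Dvd.intro _ (by simpa using hi)

lemma exists_mul_eq_level {N : ℕ} (hdet : A.det ≠ 0) (hN : IsLevel A N) :
    ∃ B : Matrix (Fin 4) (Fin 4) ℤ, A * B = N := by
  obtain ⟨-, ⟨B, hB, -⟩, -⟩ := hN
  have hdet : (A.map (Int.cast : ℤ → ℚ)).det ≠ 0 := by
    rwa [← Int.cast_det, Int.cast_ne_zero]
  refine ⟨B, map_injective (f := (Int.cast : ℤ → ℚ)) Int.cast_injective ?_⟩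
  calc (A * B).map (Int.cast : ℤ → ℚ) = (N : ℚ) • 1 := by
        rw [map_mul_intCast, hB, Matrix.mul_smul, mul_nonsing_inv _ (isUnit_iff_ne_zero.2 hdet)]
    _ = (N : Matrix (Fin 4) (Fin 4) ℤ).map Int.cast := by
        rw [Nat.cast_smul_eq_nsmul, nsmul_one]
        exact (map_natCast (Int.castRingHom ℚ).mapMatrix N).symm

lemma dvd_level {N : ℕ} (hdet : A.det ≠ 0) (hN : IsLevel A N) {P : (Matrix (Fin 4) (Fin 4) R)ˣ}
    {d : Fin 4 → R} (hP : (P.1)ᵀ * A.map Int.cast * P.1 = diagonal d) (i : Fin 4) :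
    d i ∣ (N : R) := by
  obtain ⟨B, hB⟩ := exists_mul_eq_level hdet hN
  refine dvd_of_transpose_mul_mul_eq_diagonal hP (B := B.map Int.cast) ?_ i
  rw [← map_mul_intCast, hB, Nat.cast_smul_eq_nsmul, nsmul_one]
  exact map_natCast (Int.castRingHom R).mapMatrix N

lemma det_ne_zero_of_posDefQF (hA : PosDefQF A) : A.det ≠ 0 := by
  have := hA.det_pos.ne'
  rwa [← Int.cast_det, Int.cast_ne_zero] at this

end GramMatrix

section LocalCount

open QuadraticMap Matrix

variable {A : Matrix (Fin 4) (Fin 4) ℤ} {p : ℕ} [Fact p.Prime]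

lemma isUnit_two (hp : p ≠ 2) : IsUnit (2 : ℤ_[p]) := by
  rw [PadicInt.isUnit_iff, ← Nat.cast_ofNat, PadicInt.norm_natCast_eq_one_iff]
  exact (Nat.coprime_primes Fact.out Nat.prime_two).2 hp

lemma localCount_div_eq_diagonalDensity (hp : p ≠ 2) (hA : IsGram A)
    {P : (Matrix (Fin 4) (Fin 4) ℤ_[p])ˣ} {d : Fin 4 → ℤ_[p]}
    (hP : (P.1)ᵀ * A.map Int.cast * P.1 = diagonal d) (n k : ℕ) :
    (localCount A p n k : ℝ) / p ^ (3 * k) = diagonalDensity d (2 * n) k := by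
  let f : ℤ_[p] →+* ZMod (p ^ k) := PadicInt.toZModPow k
  let P' : (Matrix (Fin 4) (Fin 4) (ZMod (p ^ k)))ˣ := Units.map f.mapMatrix.toMonoidHom P
  have hP' : (P'.1)ᵀ * A.map Int.cast * P'.1 = diagonal (f ∘ d) := by
    have := congrArg f.mapMatrix hP
    simp only [map_mul, RingHom.mapMatrix_apply, transpose_map, Matrix.map_map,
      diagonal_map (map_zero f)] at this
    rwa [show f ∘ Int.cast = Int.cast from funext (map_intCast f)] at this
  have h2 : IsUnit (2 : ZMod (p ^ k)) := by
    rw [← map_ofNat f 2]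
    exact (isUnit_two hp).map f
  have hcount : localCount A p n k = (diagonalSolutions d (2 * n) k).ncard := by
    symm
    refine Nat.card_congr (Equiv.subtypeEquiv ⟨P'.1.mulVec, P'⁻¹.1.mulVec, ?_, ?_⟩ ?_)
    · intro x
      rw [mulVec_mulVec, P'.inv_mul, one_mulVec]
    · intro x
      rw [mulVec_mulVec, P'.mul_inv, one_mulVec]
    · intro x
      rw [diagonalSolutions, Set.mem_ofPred_eq, ← two_mul_Qval_mulVec hA hP',
        map_mul, map_ofNat, map_natCast, h2.mul_right_inj]
      rfl
  have hp0 : (p : ℝ) ≠ 0 := Nat.cast_ne_zero.2 (Fact.out : p.Prime).ne_zero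
  rw [hcount, diagonalDensity, solutionDensity, Nat.card_fun, Nat.card_zmod, Nat.card_fin]
  push_cast
  field_simp
  ring

lemma not_pow_factorization_succ_dvd {N : ℕ} (hN : N ≠ 0) :
    ¬(p : ℤ_[p]) ^ (N.factorization p + 1) ∣ N := by
  intro h
  have := (PadicInt.pow_p_dvd_int_iff _ (N : ℤ)).1 (by exact_mod_cast h)
  exact Nat.pow_succ_factorization_not_dvd hN (Fact.out : p.Prime) (by exact_mod_cast this)

lemma exists_smul_eq_coe {ι : Type*} [Finite ι] {x : ι → ℚ_[p]} (hx : x ≠ 0) :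
    ∃ (c : ℚ_[p]) (z : ι → ℤ_[p]), c • x = (↑) ∘ z ∧ ∃ i, ¬(p : ℤ_[p]) ∣ z i := by
  obtain ⟨j, hj⟩ := Function.ne_iff.1 hx
  have : Nonempty ι := ⟨j⟩
  obtain ⟨i, hi⟩ := Finite.exists_max fun j ↦ ‖x j‖
  have hxi : x i ≠ 0 := norm_pos_iff.1 ((norm_pos_iff.2 hj).trans_le (hi j))
  have hle (j : ι) : ‖(x i)⁻¹ * x j‖ ≤ 1 := by
    rw [norm_mul, norm_inv, inv_mul_le_one₀ (norm_pos_iff.2 hxi)]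
    exact hi j
  let z (j : ι) : ℤ_[p] := ⟨(x i)⁻¹ * x j, hle j⟩
  have hzi : z i = 1 := PadicInt.ext (inv_mul_cancel₀ hxi)
  refine ⟨(x i)⁻¹, z, rfl, i, ?_⟩
  rw [hzi]
  exact PadicInt.prime_p.not_dvd_one

lemma exists_weightedSumSquares_eq_zero (hA : IsGram A)
    {P : (Matrix (Fin 4) (Fin 4) ℤ_[p])ˣ} {d : Fin 4 → ℤ_[p]}
    (hP : (P.1)ᵀ * A.map Int.cast * P.1 = diagonal d) {x : Fin 4 → ℚ_[p]} (hx : x ≠ 0)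
    (hQ : Qval A x = 0) :
    ∃ (z : Fin 4 → ℤ_[p]) (i : Fin 4), weightedSumSquares ℤ_[p] d z = 0 ∧ ¬(p : ℤ_[p]) ∣ z i := by
  obtain ⟨c, z, hz, i, hzi⟩ := exists_smul_eq_coe hx
  have hQz : Qval A z = 0 := by
    refine PadicInt.ext ((map_Qval PadicInt.Coe.ringHom A z).trans ?_)
    rw [show ⇑PadicInt.Coe.ringHom ∘ z = c • x from hz.symm, Qval_smul, hQ, mul_zero,
      PadicInt.coe_zero]
  have hPz : P.1 *ᵥ (P⁻¹.1 *ᵥ z) = z := by rw [mulVec_mulVec, P.mul_inv, one_mulVec]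
  have hdvd : ∃ j, ¬(p : ℤ_[p]) ∣ (P⁻¹.1 *ᵥ z) j := by
    by_contra! hdvd
    refine hzi ?_
    rw [← hPz, mulVec, dotProduct]
    exact Finset.dvd_sum fun j _ ↦ dvd_mul_of_dvd_right (hdvd j) (P.1 i j)
  obtain ⟨j, hj⟩ := hdvd
  refine ⟨_, j, ?_, hj⟩
  rw [← two_mul_Qval_mulVec hA hP, hPz, hQz, mul_zero]

end LocalCount

end LocalDensity

open LocalDensity QuadraticMap Matrix in
theorem local_density_isotropic_odd_general (A : Matrix (Fin 4) (Fin 4) ℤ) (N p n : ℕ)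
    [Fact p.Prime] (hA : IsGram A) (hdet : A.det ≠ 0) (hN : IsLevel A N) (hodd : p ≠ 2)
    (hn : 0 < n) (hiso : ∃ x : Fin 4 → ℚ_[p], x ≠ 0 ∧ Qval A x = 0)
    (h : ∃ x : Fin 4 → ℤ_[p], Qval A x = (n : ℤ_[p])) :
    DensityBound A p n ((1 - 1 / (p : ℝ)) * (p : ℝ) ^ (-(N.factorization p : ℝ))) := by
  obtain ⟨P, d, hP⟩ := exists_transpose_mul_mul_eq_diagonal (isUnit_two hodd)
    (hA.1.map (Int.cast : ℤ → ℤ_[p]))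
  obtain ⟨v, hv0, hv⟩ := hiso
  obtain ⟨z, i, hz, hzi⟩ := exists_weightedSumSquares_eq_zero hA hP hv0 hv
  obtain ⟨x, hx⟩ := h
  have hdi : ¬(p : ℤ_[p]) ^ (N.factorization p + 1) ∣ d i := fun hdvd ↦
    not_pow_factorization_succ_dvd hN.1.ne' (hdvd.trans (dvd_level hdet hN hP i))
  have hrep : weightedSumSquares ℤ_[p] d (P⁻¹.1 *ᵥ x) = 2 * n := by
    rw [← two_mul_Qval_mulVec hA hP, mulVec_mulVec, P.mul_inv, one_mulVec, hx]
  obtain ⟨β, hβ⟩ := exists_tendsto_diagonalDensity hodd d (n := 2 * n)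
    (mul_ne_zero two_ne_zero (Nat.cast_ne_zero.2 hn.ne'))
  refine ⟨β, ?_, ?_⟩
  · simpa only [localCount_div_eq_diagonalDensity hodd hA hP] using hβ
  · rw [Real.rpow_neg p.cast_nonneg, Real.rpow_natCast, ← div_eq_mul_inv]
    exact ge_of_tendsto hβ (eventually_le_diagonalDensity hodd hz hzi hdi hrep)

/-- Isotropic case bound (odd primes): if `Q` is isotropic over `ℚ_p` and `n` is
represented over `ℤ_p` then `β_p(Q;n) ≥ (1 - 1/p) · p^(-ord_p(N(Q)))`. -/
theorem local_density_isotropic_odd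
    (A : Matrix (Fin 4) (Fin 4) ℤ) (N p n : ℕ) [Fact p.Prime]
    (hA : IsGram A) (hprim : IsPrimitiveQF A) (hpd : PosDefQF A)
    (hN : IsLevel A N) (hodd : p ≠ 2) (hn : 0 < n)
    (hiso : ∃ x : Fin 4 → ℚ_[p], x ≠ 0 ∧ Qval A x = 0)
    (h : ∃ x : Fin 4 → ℤ_[p], Qval A x = (n : ℤ_[p])) :
    DensityBound A p n
      ((1 - 1 / (p : ℝ)) * (p : ℝ) ^ (-(N.factorization p : ℝ))) := by
  exact local_density_isotropic_odd_general A N p n hA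
    (LocalDensity.det_ne_zero_of_posDefQF hpd) hN hodd hn hiso h
end

section
/- Let Q be a primitive positive-definite quaternary integer-valued quadratic form with level N(Q), and let n be a positive integer. Suppose Q is isotropic over ℚ_2 (i.e. there exists a nonzero x ∈ ℚ_2⁴ with Q(x) = 0) and n is represented by Q over ℤ_2. Then the local density β_2(Q;n) exists and satisfies β_2(Q;n) ≥ 2^(−2 − ord_2(N(Q))), where ord_2 denotes the 2-adic valuation. -/
open scoped BigOperators

/-!
If `p ^ c` divides `q x - n` and `p ^ (c + 1)` divides `q y`, while `polar q x y` has order exactly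
`c`, then by Hensel's lemma the line `x + t • y` carries a solution of `q = n` modulo `p ^ k`;
counting the lines through a ball of such points bounds the number of solutions from below.

Write `ν` for the order of the level. The level provides, for each coordinate `i`, a vector `y` with
`polar q y z = p ^ ν * z i` for all `z` and with `q y` divisible by `p ^ ν`. Let `q x = n` and let
`v` be isotropic and primitive. If `polar q x` is not divisible by `p ^ ⌈ν / 2⌉`, a vector on which
its order is minimal gives a good direction at `x`. Otherwise suppose `polar q x v` has order
`c ≤ ν`. If `polar q v` is divisible by `p ^ ⌈c / 2⌉`, then `v` is a good direction at `x`; if not,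
the first argument applies at `x + v`. Finally, if `p ^ (ν + 1)` divides `polar q x v`, then one of
`x` and `x + v` is primitive and solves `q = n` modulo `p ^ (ν + 1)`, and a dual vector `y` is a
good direction there. When the order `c` is even, a single ball falls short by a factor `p`, and
Chevalley–Warning provides `p` of them.

The density exists because for large `k` every residue modulo `p ^ (k + 1)` that agrees with `n`
modulo `p ^ k` is `n` times the square of a unit, so that all of them are represented equally often.
-/

open QuadraticMap
open scoped Matrix

/-! ### Counting fibres -/

theorem ncard_preimage_mul_card {G H : Type*} [AddGroup G] [AddGroup H] {f : G →+ H}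
    (hf : Function.Surjective f) (s : Set H) :
    (f ⁻¹' s).ncard * Nat.card H = s.ncard * Nat.card G := by
  have card_preimage (t : Set H) : (f ⁻¹' t).ncard = t.ncard * Nat.card f.ker := by
    obtain ⟨g, hg⟩ := hf.hasRightInverse
    let e : f ⁻¹' t ≃ t × f.ker :=
      { toFun x := (⟨f x, x.2⟩, ⟨x - g (f x), by simp [AddMonoidHom.mem_ker, hg (f x)]⟩)
        invFun y := ⟨y.2 + g y.1, by simp [AddMonoidHom.mem_ker.1 y.2.2, hg y.1]⟩
        left_inv x := by simp
        right_inv y := by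
          ext <;> simp [AddMonoidHom.mem_ker.1 y.2.2, hg y.1] }
    exact (Nat.card_congr e).trans (Nat.card_prod _ _)
  have card_domain : Nat.card G = Nat.card H * Nat.card f.ker := by
    simpa [Set.ncard_univ] using card_preimage Set.univ
  rw [card_preimage, card_domain]
  ring

theorem ncard_preimage_eq_ncard_mul {α β : Type*} [Finite α] [Finite β] {g : α → β} {t : Set β}
    {c : ℕ} (hg : ∀ r ∈ t, (g ⁻¹' {r}).ncard = c) : (g ⁻¹' t).ncard = t.ncard * c := by
  classical
  have := Fintype.ofFinite α
  have := Fintype.ofFinite β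
  rw [Set.ncard_eq_toFinset_card', Set.ncard_eq_toFinset_card',
    Finset.card_eq_sum_card_fiberwise (f := g) (t := t.toFinset) (by simp [Set.MapsTo])]
  refine Finset.sum_const_nat fun r hr => ?_
  rw [← hg r (Set.mem_toFinset.1 hr), Set.ncard_eq_toFinset_card']
  congr 1
  ext x
  simp only [Finset.mem_filter, Set.mem_toFinset, Set.mem_preimage, Set.mem_singleton_iff]
  exact and_iff_right_of_imp fun hx => hx ▸ Set.mem_toFinset.1 hr

/-! ### Linear and quadratic maps as polynomials -/

theorem exists_smul_eq_of_forall_dvd {R M : Type*} [CommRing R] [IsDomain R] [AddCommGroup M]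
    [Module R M] {a : R} (ha : a ≠ 0) {f : M →ₗ[R] R} (h : ∀ z, a ∣ f z) :
    ∃ g : M →ₗ[R] R, a • g = f := by
  choose g hg using h
  refine ⟨⟨⟨g, fun x y => ?_⟩, fun r x => ?_⟩, LinearMap.ext fun z => (hg z).symm⟩
  · apply mul_left_cancel₀ ha
    rw [mul_add, ← hg, ← hg, ← hg, map_add]
  · apply mul_left_cancel₀ ha
    rw [← hg, map_smul, hg, smul_eq_mul, smul_eq_mul, RingHom.id_apply, mul_left_comm]

section MvPolynomial
open MvPolynomial

variable {R ι : Type*} [CommRing R]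

theorem exists_isHomogeneous_one_eval_eq [Finite ι] (l : (ι → R) →ₗ[R] R) :
    ∃ f : MvPolynomial ι R, f.IsHomogeneous 1 ∧ ∀ x, eval x f = l x := by
  classical
  have := Fintype.ofFinite ι
  refine ⟨∑ i, C (l (Pi.single i 1)) * X i,
    .sum _ _ _ fun i _ => isHomogeneous_C_mul_X _ i, fun x => ?_⟩
  simp only [map_sum, map_mul, eval_C, eval_X]
  conv_rhs => rw [pi_eq_sum_univ' x, map_sum]
  simp only [map_smul, smul_eq_mul, mul_comm]

theorem exists_isHomogeneous_two_eval_eq [Finite ι] (q : QuadraticForm R (ι → R)) :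
    ∃ f : MvPolynomial ι R, f.IsHomogeneous 2 ∧ ∀ x, eval x f = q x := by
  classical
  have := Fintype.ofFinite ι
  obtain ⟨B, rfl⟩ := LinearMap.BilinMap.toQuadraticMap_surjective q
  choose f hdeg hf using fun i => exists_isHomogeneous_one_eval_eq (B (Pi.single i 1))
  refine ⟨∑ i, X i * f i, .sum _ _ _ fun i _ => (isHomogeneous_X R i).mul (hdeg i), fun x => ?_⟩
  have hB : B x = ∑ i, x i • B (Pi.single i 1) := by
    conv_lhs => rw [pi_eq_sum_univ' x, map_sum]
    simp only [map_smul]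
  rw [LinearMap.BilinMap.toQuadraticMap_apply, hB]
  simp only [map_sum, map_mul, eval_X, hf, LinearMap.sum_apply, LinearMap.smul_apply, smul_eq_mul]

theorem le_ncard_common_zeros [Fintype ι] {K : Type*} [Field K] [Finite K] (p : ℕ)
    [Fact p.Prime] [CharP K p] {f₁ f₂ : MvPolynomial ι K}
    (hdeg : f₁.totalDegree + f₂.totalDegree < Fintype.card ι)
    (h₁ : eval 0 f₁ = 0) (h₂ : eval 0 f₂ = 0) :
    p ≤ {x : ι → K | eval x f₁ = 0 ∧ eval x f₂ = 0}.ncard := by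
  classical
  have := Fintype.ofFinite K
  have hdvd := char_dvd_card_solutions_of_add_lt p hdeg
  rw [← Nat.card_eq_fintype_card] at hdvd
  exact Nat.le_of_dvd (Nat.card_pos_iff.2 ⟨⟨0, h₁, h₂⟩, inferInstance⟩) hdvd

end MvPolynomial

/-! ### Divisibility by powers of `p` in the `p`-adic integers -/

section PadicInt

variable {p : ℕ} [Fact p.Prime]

theorem toZModPow_eq_zero_iff {k : ℕ} {x : ℤ_[p]} :
    PadicInt.toZModPow k x = 0 ↔ (p : ℤ_[p]) ^ k ∣ x := by
  rw [← RingHom.mem_ker, PadicInt.ker_toZModPow, Ideal.mem_span_singleton]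

theorem isUnit_or_dvd (x : ℤ_[p]) : IsUnit x ∨ (p : ℤ_[p]) ∣ x := by
  rw [← PadicInt.norm_lt_one_iff_dvd, ← PadicInt.not_isUnit_iff]
  exact em _

theorem associated_pow_or_pow_succ_dvd {a : ℕ} {x : ℤ_[p]} (h : (p : ℤ_[p]) ^ a ∣ x) :
    Associated ((p : ℤ_[p]) ^ a) x ∨ (p : ℤ_[p]) ^ (a + 1) ∣ x := by
  obtain ⟨y, rfl⟩ := h
  refine (isUnit_or_dvd y).imp (associated_mul_unit_right _ _) fun hy => ?_
  exact pow_succ (p : ℤ_[p]) a ▸ mul_dvd_mul_left _ hy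

theorem forall_pow_dvd_or_exists_associated {α : Type*} (f : α → ℤ_[p]) (j : ℕ) :
    (∀ z, (p : ℤ_[p]) ^ j ∣ f z) ∨
      ∃ a < j, (∀ z, (p : ℤ_[p]) ^ a ∣ f z) ∧ ∃ z, Associated ((p : ℤ_[p]) ^ a) (f z) := by
  induction j with
  | zero => simp
  | succ j ih =>
    rcases ih with hj | ⟨a, ha, h⟩
    · by_cases hunit : ∃ z, Associated ((p : ℤ_[p]) ^ j) (f z)
      · exact .inr ⟨j, j.lt_succ_self, hj, hunit⟩
      · push Not at hunit
        exact .inl fun z => (associated_pow_or_pow_succ_dvd (hj z)).resolve_left (hunit z)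
    · exact .inr ⟨a, by lia, h⟩

theorem pow_dvd_or_exists_associated (x : ℤ_[p]) (j : ℕ) :
    (p : ℤ_[p]) ^ j ∣ x ∨ ∃ a < j, Associated ((p : ℤ_[p]) ^ a) x := by
  refine (forall_pow_dvd_or_exists_associated (fun _ : Unit => x) j).imp (· ()) ?_
  rintro ⟨a, ha, -, -, h⟩
  exact ⟨a, ha, h⟩

theorem isUnit_add_of_dvd {x y : ℤ_[p]} (hx : IsUnit x) (hy : (p : ℤ_[p]) ∣ y) :
    IsUnit (x + y) :=
  (isUnit_or_dvd _).resolve_right fun h =>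
    PadicInt.prime_p.not_isUnit (isUnit_of_dvd_unit ((dvd_add_left hy).1 h) hx)

theorem associated_pow_add {a : ℕ} {x y : ℤ_[p]} (hx : Associated ((p : ℤ_[p]) ^ a) x)
    (hy : (p : ℤ_[p]) ^ (a + 1) ∣ y) : Associated ((p : ℤ_[p]) ^ a) (x + y) := by
  obtain ⟨u, rfl⟩ := hx
  obtain ⟨z, rfl⟩ := hy
  rw [pow_succ, mul_assoc, ← mul_add]
  exact associated_mul_unit_right _ _ (isUnit_add_of_dvd u.isUnit (dvd_mul_right _ _))

theorem associated_pow_factorization_natCast {N : ℕ} (hN : N ≠ 0) :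
    Associated ((p : ℤ_[p]) ^ N.factorization p) (N : ℤ_[p]) := by
  have pow_dvd_natCast (k : ℕ) : (p : ℤ_[p]) ^ k ∣ N ↔ p ^ k ∣ N := by
    exact_mod_cast PadicInt.pow_p_dvd_int_iff k (N : ℤ)
  refine (associated_pow_or_pow_succ_dvd ?_).resolve_right ?_ <;> rw [pow_dvd_natCast]
  · exact Nat.ordProj_dvd N p
  · exact Nat.pow_succ_factorization_not_dvd hN Fact.out

/-! ### Solutions modulo `p ^ k` on lines -/

theorem injective_unit_mul_add_nilpotent_mul_sq {R : Type*} [CommRing R] {u d : R}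
    (hu : IsUnit u) (hd : IsNilpotent d) :
    Function.Injective fun t : R => u * t + d * t ^ 2 := by
  intro s t h
  have hfactor : (s - t) * (u + d * (s + t)) = 0 := by linear_combination h
  have hunit : IsUnit (u + d * (s + t)) :=
    ((Commute.all _ _).isNilpotent_mul_right hd).isUnit_add_left_of_commute hu (Commute.all _ _)
  exact sub_eq_zero.1 (hunit.mul_left_eq_zero.1 hfactor)

/-- Coordinatewise reduction `ℤ_p^ι → (ℤ/p^k)^ι`, used to count `p`-adic vectors up to congruence.
-/
noncomputable def reduceMod (ι : Type*) (k : ℕ) : (ι → ℤ_[p]) →+* (ι → ZMod (p ^ k)) :=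
  (PadicInt.toZModPow k).compLeft ι

variable {ι : Type*}

theorem reduceMod_surjective (k : ℕ) : Function.Surjective (reduceMod (p := p) ι k) :=
  (ZMod.ringHom_surjective (PadicInt.toZModPow k)).comp_left

theorem reduceMod_eq_iff {k : ℕ} {x x' : ι → ℤ_[p]} :
    reduceMod ι k x = reduceMod ι k x' ↔ ∃ w, x = x' + (p : ℤ_[p]) ^ k • w := by
  rw [← sub_eq_zero, ← map_sub, funext_iff]
  simp only [reduceMod, RingHom.compLeft_apply, Function.comp_apply, Pi.zero_apply, Pi.sub_apply,
    toZModPow_eq_zero_iff, dvd_def]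
  rw [Classical.skolem]
  simp only [funext_iff, Pi.add_apply, Pi.smul_apply, smul_eq_mul, sub_eq_iff_eq_add']

/-- The solutions of `q x ≡ n` modulo `p ^ k`, as residue classes. They are taken as images of
`p`-adic vectors, so that `q` need not be reduced to a form over `ℤ/p^k`. -/
def solutionsMod (q : QuadraticForm ℤ_[p] (ι → ℤ_[p])) (n : ℤ_[p]) (k : ℕ) :
    Set (ι → ZMod (p ^ k)) :=
  reduceMod ι k '' {x | (p : ℤ_[p]) ^ k ∣ q x - n}

variable {q : QuadraticForm ℤ_[p] (ι → ℤ_[p])} {n : ℤ_[p]}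

theorem exists_pow_dvd_sub_on_line {c k : ℕ} (hck : c ≤ k) {x y : ι → ℤ_[p]}
    (hx : (p : ℤ_[p]) ^ c ∣ q x - n) (hy : (p : ℤ_[p]) ^ (c + 1) ∣ q y)
    (hxy : Associated ((p : ℤ_[p]) ^ c) (polar q x y)) :
    ∃ t : ZMod (p ^ (k - c)), ∀ s, PadicInt.toZModPow (k - c) s = t →
      (p : ℤ_[p]) ^ k ∣ q (x + s • y) - n := by
  obtain ⟨α, hα⟩ := hx
  obtain ⟨β, hβ⟩ := hy
  obtain ⟨u, hu⟩ := hxy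
  let φ := PadicInt.toZModPow (p := p) (k - c)
  have hnil : IsNilpotent (φ (p * β)) := by
    refine ⟨k - c, ?_⟩
    rw [← map_pow, toZModPow_eq_zero_iff, mul_pow]
    exact dvd_mul_right _ _
  obtain ⟨t, ht⟩ := Finite.surjective_of_injective
    (injective_unit_mul_add_nilpotent_mul_sq (u.isUnit.map φ) hnil) (-φ α)
  refine ⟨t, fun s hs => ?_⟩
  have hroot : (p : ℤ_[p]) ^ (k - c) ∣ α + u * s + p * β * s ^ 2 := by
    rw [← toZModPow_eq_zero_iff]
    simp only [map_add, map_mul, map_pow, hs] at ht ⊢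
    linear_combination ht
  have hline : q (x + s • y) - n = p ^ c * (α + u * s + p * β * s ^ 2) := by
    rw [QuadraticMap.map_add (⇑q) x (s • y), QuadraticMap.map_smul, polar_smul_right, hβ, ← hu,
      smul_eq_mul, smul_eq_mul]
    linear_combination hα
  rw [hline, ← pow_mul_pow_sub _ hck]
  exact mul_dvd_mul_left _ hroot

theorem ncard_le_ncard_solutionsMod_mul [Finite ι] {c k : ℕ} (hck : c ≤ k)
    {X : Set (ι → ZMod (p ^ k))} {y : ι → ℤ_[p]} (hy : (p : ℤ_[p]) ^ (c + 1) ∣ q y)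
    (hX : ∀ x, reduceMod ι k x ∈ X →
      (p : ℤ_[p]) ^ c ∣ q x - n ∧ Associated ((p : ℤ_[p]) ^ c) (polar q x y)) :
    X.ncard ≤ (solutionsMod q n k).ncard * p ^ (k - c) := by
  -- A point of `X` is recovered from the solution on its line and the parameter of that solution.
  obtain ⟨lift, hlift⟩ := (reduceMod_surjective (p := p) (ι := ι) k).hasRightInverse
  obtain ⟨rep, hrep⟩ := (ZMod.ringHom_surjective
    (PadicInt.toZModPow (p := p) (k - c))).hasRightInverse
  have exists_param (x) (hx : x ∈ X) : ∃ t, (p : ℤ_[p]) ^ k ∣ q (lift x + rep t • y) - n := by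
    obtain ⟨hxn, hxy⟩ := hX (lift x) (by rwa [hlift x])
    obtain ⟨t, ht⟩ := exists_pow_dvd_sub_on_line hck hxn hy hxy
    exact ⟨t, ht _ (hrep t)⟩
  choose! t ht using exists_param
  have hle := Set.ncard_le_ncard_of_injOn
    (t := solutionsMod q n k ×ˢ (Set.univ : Set (ZMod (p ^ (k - c)))))
    (fun x => (reduceMod ι k (lift x + rep (t x) • y), t x))
    (fun x hx => ⟨⟨_, ht x hx, rfl⟩, Set.mem_univ _⟩)
    (fun x _ x' _ h => by
      obtain ⟨hpoint, hparam⟩ := Prod.mk.inj h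
      rwa [hparam, map_add, map_add, add_left_inj, hlift, hlift] at hpoint)
    (Set.toFinite _)
  simpa [Set.ncard_prod, Set.ncard_univ] using hle

variable [Fintype ι]

theorem ncard_mul_pow_le_pow_mul_ncard_solutionsMod {j c k : ℕ} (hjk : j ≤ k) (hck : c ≤ k)
    {Y : Set (ι → ZMod (p ^ j))} {y : ι → ℤ_[p]} (hy : (p : ℤ_[p]) ^ (c + 1) ∣ q y)
    (hY : ∀ x, reduceMod ι j x ∈ Y →
      (p : ℤ_[p]) ^ c ∣ q x - n ∧ Associated ((p : ℤ_[p]) ^ c) (polar q x y)) :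
    Y.ncard * p ^ (Fintype.card ι * k + c) ≤
      p ^ (Fintype.card ι * j + k) * (solutionsMod q n k).ncard := by
  let π : (ι → ZMod (p ^ k)) →+* (ι → ZMod (p ^ j)) :=
    (ZMod.castHom (pow_dvd_pow p hjk) (ZMod (p ^ j))).compLeft ι
  have hπ (x : ι → ℤ_[p]) : π (reduceMod ι k x) = reduceMod ι j x := by
    ext i
    exact congr($(PadicInt.zmod_cast_comp_toZModPow j k hjk) (x i))
  have hπsurj : Function.Surjective π.toAddMonoidHom :=
    Function.Surjective.comp_left (ZMod.castHom_surjective (pow_dvd_pow p hjk))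
  have hcard := ncard_preimage_mul_card hπsurj Y
  have hle := ncard_le_ncard_solutionsMod_mul (X := π ⁻¹' Y) hck hy fun x hx =>
    hY x (by rwa [Set.mem_preimage, hπ] at hx)
  simp only [Nat.card_pi, Nat.card_zmod, Finset.prod_const, Finset.card_univ, ← pow_mul'] at hcard
  calc Y.ncard * p ^ (Fintype.card ι * k + c)
      = (π ⁻¹' Y).ncard * p ^ (Fintype.card ι * j) * p ^ c := by
        rw [pow_add, ← mul_assoc, ← hcard]; rfl
    _ ≤ (solutionsMod q n k).ncard * p ^ (k - c) * p ^ (Fintype.card ι * j) * p ^ c := by gcongr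
    _ = (p ^ (k - c) * p ^ c) * p ^ (Fintype.card ι * j) * (solutionsMod q n k).ncard := by ring
    _ = p ^ (Fintype.card ι * j + k) * (solutionsMod q n k).ncard := by
        rw [pow_sub_mul_pow p hck]; ring

theorem pow_le_pow_mul_ncard_of_associated_polar {a k : ℕ} (hk : 2 * a + 1 ≤ k)
    {x e : ι → ℤ_[p]} (hx : (p : ℤ_[p]) ^ (2 * a + 1) ∣ q x - n)
    (hpolar : ∀ z, (p : ℤ_[p]) ^ a ∣ polar q x z)
    (he : Associated ((p : ℤ_[p]) ^ a) (polar q x e)) :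
    p ^ (Fintype.card ι * k + (2 * a + 1)) ≤
      p ^ (Fintype.card ι * (a + 1) + k) * (solutionsMod q n k).ncard := by
  have hy : (p : ℤ_[p]) ^ (2 * a + 1 + 1) ∣ q ((p : ℤ_[p]) ^ (a + 1) • e) := by
    rw [QuadraticMap.map_smul, smul_eq_mul, ← pow_add]
    exact Dvd.intro (q e) (by ring)
  have hline := ncard_mul_pow_le_pow_mul_ncard_solutionsMod (Y := {reduceMod ι (a + 1) x}) (n := n)
    (by lia) hk hy fun x' hx' => by
      obtain ⟨w, rfl⟩ := reduceMod_eq_iff.1 hx'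
      obtain ⟨b, hb⟩ := hpolar w
      constructor
      · have hsplit : q (x + (p : ℤ_[p]) ^ (a + 1) • w) - n =
            (q x - n) + p ^ (2 * a + 1) * (p * q w + b) := by
          rw [QuadraticMap.map_add (⇑q) x, QuadraticMap.map_smul, polar_smul_right, hb,
            smul_eq_mul, smul_eq_mul]
          ring
        exact hsplit ▸ dvd_add hx (dvd_mul_right _ _)
      · have hsplit : polar q (x + (p : ℤ_[p]) ^ (a + 1) • w) ((p : ℤ_[p]) ^ (a + 1) • e) =
            p ^ (a + 1) * (polar q x e + p ^ (a + 1) * polar q w e) := by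
          simp only [polar_add_left, polar_smul_left, polar_smul_right, smul_eq_mul]
        rw [hsplit, show 2 * a + 1 = (a + 1) + a by ring, pow_add]
        exact (associated_pow_add he (dvd_mul_right _ _)).mul_left _
  rwa [Set.ncard_singleton, one_mul] at hline

theorem ncard_mul_pow_le_pow_mul_ncard_of_translate {j c k : ℕ} (hjk : j ≤ k) (hck : c + 1 ≤ k)
    {x y : ι → ℤ_[p]} (hx : (p : ℤ_[p]) ^ (c + 1) ∣ q x - n) (hy : (p : ℤ_[p]) ^ c ∣ q y)
    (hxy : Associated ((p : ℤ_[p]) ^ c) (polar q x y)) {Y : Set (ι → ZMod (p ^ j))}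
    (hY : ∀ z, reduceMod ι j (x + z) ∈ Y →
      (p : ℤ_[p]) ^ (c + 1) ∣ q z + polar q x z ∧ (p : ℤ_[p]) ^ (c + 1) ∣ polar q y z) :
    Y.ncard * p ^ (Fintype.card ι * k + (c + 1)) ≤
      p ^ (Fintype.card ι * j + k) * (solutionsMod q n k).ncard := by
  have hpy : (p : ℤ_[p]) ^ (c + 1 + 1) ∣ q ((p : ℤ_[p]) • y) := by
    rw [QuadraticMap.map_smul, pow_succ', pow_succ', ← mul_assoc]
    exact mul_dvd_mul_left _ hy
  refine ncard_mul_pow_le_pow_mul_ncard_solutionsMod hjk hck hpy fun x' hx' => ?_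
  obtain ⟨z, rfl⟩ : ∃ z, x' = x + z := ⟨x' - x, by simp⟩
  obtain ⟨hz, hyz⟩ := hY z hx'
  constructor
  · rw [QuadraticMap.map_add (⇑q) x z]
    convert dvd_add hx hz using 1
    ring
  · rw [polar_smul_right, polar_add_left, polar_comm q z, pow_succ', smul_eq_mul]
    exact (associated_pow_add hxy hyz).mul_left _

theorem pow_le_pow_mul_ncard_of_odd_order {h k : ℕ} (hk : 2 * (h + 1) ≤ k) {x y : ι → ℤ_[p]}
    (hx : (p : ℤ_[p]) ^ (2 * h + 2) ∣ q x - n) (hy : (p : ℤ_[p]) ^ (2 * h + 1) ∣ q y)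
    (hxy : Associated ((p : ℤ_[p]) ^ (2 * h + 1)) (polar q x y))
    (hxpolar : ∀ z, (p : ℤ_[p]) ^ (h + 1) ∣ polar q x z)
    (hypolar : ∀ z, (p : ℤ_[p]) ^ (h + 1) ∣ polar q y z) :
    p ^ (Fintype.card ι * k + 2 * (h + 1)) ≤
      p ^ (Fintype.card ι * (h + 1) + k) * (solutionsMod q n k).ncard := by
  have hline := ncard_mul_pow_le_pow_mul_ncard_of_translate (Y := {reduceMod ι (h + 1) x})
    (k := k) (by lia) (by lia) hx hy hxy fun z hz => by
      obtain ⟨w, hw⟩ := reduceMod_eq_iff.1 hz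
      obtain rfl : z = _ := add_left_cancel hw
      have hsq : (p : ℤ_[p]) ^ (2 * h + 1 + 1) = p ^ (h + 1) * p ^ (h + 1) := by ring
      simp only [QuadraticMap.map_smul, polar_smul_right, smul_eq_mul, hsq]
      exact ⟨dvd_add (dvd_mul_right _ _) (mul_dvd_mul_left _ (hxpolar w)),
        mul_dvd_mul_left _ (hypolar w)⟩
  rwa [Set.ncard_singleton, one_mul] at hline

theorem le_ncard_reduceMod_common_zeros (hι : 3 < Fintype.card ι)
    (q : QuadraticForm ℤ_[p] (ι → ℤ_[p])) (l m : (ι → ℤ_[p]) →ₗ[ℤ_[p]] ℤ_[p]) :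
    p ≤ (reduceMod ι 1 '' {w | (p : ℤ_[p]) ∣ q w + l w ∧ (p : ℤ_[p]) ∣ m w}).ncard := by
  have : Fact (p ^ 1).Prime := ⟨by simpa using Fact.out⟩
  have : CharP (ZMod (p ^ 1)) p := ⟨fun a => by rw [ZMod.natCast_eq_zero_iff, pow_one]⟩
  obtain ⟨f, hfdeg, hf⟩ := exists_isHomogeneous_two_eval_eq q
  obtain ⟨g, hgdeg, hg⟩ := exists_isHomogeneous_one_eval_eq l
  obtain ⟨g', hgdeg', hg'⟩ := exists_isHomogeneous_one_eval_eq m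
  have hf₀ : f.constantCoeff = 0 := by simpa using hf 0
  have hg₀ : g.constantCoeff = 0 := by simpa using hg 0
  have hg'₀ : g'.constantCoeff = 0 := by simpa using hg' 0
  let φ := PadicInt.toZModPow (p := p) 1
  have eval_reduceMod (F : MvPolynomial ι ℤ_[p]) (w : ι → ℤ_[p]) :
      (MvPolynomial.map φ F).eval (reduceMod ι 1 w) = φ (F.eval w) :=
    MvPolynomial.map_eval φ w F ▸ rfl
  have hdeg : (MvPolynomial.map φ f + MvPolynomial.map φ g).totalDegree +
      (MvPolynomial.map φ g').totalDegree < Fintype.card ι := by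
    have hfg := (MvPolynomial.totalDegree_add _ _).trans
      (max_le_max (hfdeg.map φ).totalDegree_le (hgdeg.map φ).totalDegree_le)
    have hg' := (hgdeg'.map φ).totalDegree_le
    lia
  refine (le_ncard_common_zeros p hdeg ?_ ?_).trans (Set.ncard_le_ncard ?_ (Set.toFinite _))
  · simp [hf₀, hg₀]
  · simp [hg'₀]
  · intro v hv
    obtain ⟨w, rfl⟩ := reduceMod_surjective 1 v
    simp only [Set.mem_ofPred_eq, map_add, eval_reduceMod, hf, hg, hg'] at hv
    simp only [← map_add, φ, toZModPow_eq_zero_iff, pow_one] at hv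
    exact ⟨w, hv, rfl⟩

theorem pow_le_pow_mul_ncard_of_even_order (hι : 3 < Fintype.card ι) {h k : ℕ}
    (hk : 2 * h + 1 ≤ k) {x y : ι → ℤ_[p]}
    (hx : (p : ℤ_[p]) ^ (2 * h + 1) ∣ q x - n) (hy : (p : ℤ_[p]) ^ (2 * h) ∣ q y)
    (hxy : Associated ((p : ℤ_[p]) ^ (2 * h)) (polar q x y))
    (hxpolar : ∀ z, (p : ℤ_[p]) ^ h ∣ polar q x z)
    (hypolar : ∀ z, (p : ℤ_[p]) ^ h ∣ polar q y z) :
    p ^ (Fintype.card ι * k + 2 * (h + 1)) ≤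
      p ^ (Fintype.card ι * (h + 1) + k) * (solutionsMod q n k).ncard := by
  have hp : (p : ℤ_[p]) ≠ 0 := PadicInt.prime_p.ne_zero
  obtain ⟨l, hl⟩ := exists_smul_eq_of_forall_dvd (pow_ne_zero h hp) (f := q.polarBilin x) hxpolar
  obtain ⟨m, hm⟩ := exists_smul_eq_of_forall_dvd (pow_ne_zero h hp) (f := q.polarBilin y) hypolar
  -- The conditions for `x + p ^ h • w` to carry a line become, after division by `p ^ (2 * h)`,
  -- one quadratic and one linear equation for `w` modulo `p`.
  let F (w : ι → ℤ_[p]) := reduceMod ι (h + 1) (x + (p : ℤ_[p]) ^ h • w)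
  obtain ⟨W, hWsub, hWbij⟩ := Set.exists_subset_bijOn
    {w | (p : ℤ_[p]) ∣ q w + l w ∧ (p : ℤ_[p]) ∣ m w} (reduceMod ι 1)
  have hFinj : W.InjOn F := fun w hw w' hw' hF => by
    obtain ⟨u, hu⟩ := reduceMod_eq_iff.1 hF
    refine hWbij.injOn hw hw' (reduceMod_eq_iff.2 ⟨u, ?_⟩)
    apply smul_right_injective _ (pow_ne_zero h hp)
    rw [add_assoc, add_right_inj] at hu
    simpa [pow_succ, mul_smul] using hu
  have hFcard : p ≤ (F '' W).ncard := by
    rw [hFinj.ncard_image, ← hWbij.injOn.ncard_image, hWbij.image_eq]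
    exact le_ncard_reduceMod_common_zeros hι q l m
  have hline := ncard_mul_pow_le_pow_mul_ncard_of_translate (Y := F '' W) (k := k)
    (by lia) (by lia) hx hy hxy fun z ⟨w, hw, hwz⟩ => by
      obtain ⟨u, hu⟩ := reduceMod_eq_iff.1 hwz.symm
      obtain ⟨⟨s, hs⟩, ⟨t, ht⟩⟩ := hWsub hw
      have hz : z = (p : ℤ_[p]) ^ h • (w + (p : ℤ_[p]) • u) := by
        rw [add_assoc, add_right_inj] at hu
        rw [hu, smul_add, smul_smul, ← pow_succ]
      have hl' (v) : polar q x v = p ^ h * l v := congr($hl v).symm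
      have hm' (v) : polar q y v = p ^ h * m v := congr($hm v).symm
      rw [hz, QuadraticMap.map_smul, hl', hm', QuadraticMap.map_add (⇑q)]
      simp only [map_smul, map_add, smul_eq_mul, QuadraticMap.map_smul, polar_smul_right, ht]
      exact ⟨⟨s + p * q u + polar q w u + l u, by linear_combination p ^ (2 * h) * hs⟩,
        ⟨t + m u, by ring⟩⟩
  calc p ^ (Fintype.card ι * k + 2 * (h + 1))
      = p * p ^ (Fintype.card ι * k + (2 * h + 1)) := by ring
    _ ≤ (F '' W).ncard * p ^ (Fintype.card ι * k + (2 * h + 1)) := by gcongr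
    _ ≤ _ := hline

theorem pow_le_pow_mul_ncard_of_order (hι : 3 < Fintype.card ι) {c k : ℕ} (hk : c + 1 ≤ k)
    {x y : ι → ℤ_[p]} (hx : (p : ℤ_[p]) ^ (c + 1) ∣ q x - n) (hy : (p : ℤ_[p]) ^ c ∣ q y)
    (hxy : Associated ((p : ℤ_[p]) ^ c) (polar q x y))
    (hxpolar : ∀ z, (p : ℤ_[p]) ^ ((c + 1) / 2) ∣ polar q x z)
    (hypolar : ∀ z, (p : ℤ_[p]) ^ ((c + 1) / 2) ∣ polar q y z) :
    p ^ (Fintype.card ι * k + 2 * (c / 2 + 1)) ≤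
      p ^ (Fintype.card ι * (c / 2 + 1) + k) * (solutionsMod q n k).ncard := by
  obtain ⟨h, rfl | rfl⟩ := c.even_or_odd'
  · rw [show (2 * h + 1) / 2 = h by lia] at hxpolar hypolar
    rw [show 2 * h / 2 = h by lia]
    exact pow_le_pow_mul_ncard_of_even_order hι hk hx hy hxy hxpolar hypolar
  · rw [show (2 * h + 1 + 1) / 2 = h + 1 by lia] at hxpolar hypolar
    rw [show (2 * h + 1) / 2 = h by lia]
    exact pow_le_pow_mul_ncard_of_odd_order hk hx hy hxy hxpolar hypolar

end PadicInt

/-! ### Quaternary forms with an isotropic vector -/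

theorem pow_le_pow_mul_of_add_le_add {p a b c d s : ℕ} (hp : 0 < p) (h : p ^ a ≤ p ^ b * s)
    (hexp : b + c ≤ a + d) : p ^ c ≤ p ^ d * s := by
  refine Nat.le_of_mul_le_mul_left ?_ (pow_pos hp a)
  calc p ^ a * p ^ c ≤ p ^ b * s * p ^ c := by gcongr
    _ = p ^ (b + c) * s := by ring
    _ ≤ p ^ (a + d) * s := by gcongr
    _ = p ^ a * (p ^ d * s) := by ring

section Quaternary

variable {p : ℕ} [Fact p.Prime] {q : QuadraticForm ℤ_[p] (Fin 4 → ℤ_[p])}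
  {n : ℤ_[p]} {ν k : ℕ}

theorem pow_three_mul_le_of_associated_polar {a : ℕ} (ha : 2 * a + 1 ≤ ν) (hk : ν ≤ k)
    {x e : Fin 4 → ℤ_[p]} (hx : (p : ℤ_[p]) ^ (2 * a + 1) ∣ q x - n)
    (hpolar : ∀ z, (p : ℤ_[p]) ^ a ∣ polar q x z)
    (he : Associated ((p : ℤ_[p]) ^ a) (polar q x e)) :
    p ^ (3 * k) ≤ p ^ (ν + 2) * (solutionsMod q n k).ncard :=
  pow_le_pow_mul_of_add_le_add (Fact.out : p.Prime).pos
    (pow_le_pow_mul_ncard_of_associated_polar (ha.trans hk) hx hpolar he)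
    (by rw [Fintype.card_fin]; lia)

theorem pow_three_mul_le_of_order {c : ℕ} (hc : c ≤ ν) (hk : ν + 1 ≤ k) {x y : Fin 4 → ℤ_[p]}
    (hx : (p : ℤ_[p]) ^ (c + 1) ∣ q x - n) (hy : (p : ℤ_[p]) ^ c ∣ q y)
    (hxy : Associated ((p : ℤ_[p]) ^ c) (polar q x y))
    (hxpolar : ∀ z, (p : ℤ_[p]) ^ ((c + 1) / 2) ∣ polar q x z)
    (hypolar : ∀ z, (p : ℤ_[p]) ^ ((c + 1) / 2) ∣ polar q y z) :
    p ^ (3 * k) ≤ p ^ (ν + 2) * (solutionsMod q n k).ncard :=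
  pow_le_pow_mul_of_add_le_add (Fact.out : p.Prime).pos
    (pow_le_pow_mul_ncard_of_order (by simp) (by lia) hx hy hxy hxpolar hypolar)
    (by rw [Fintype.card_fin]; lia)

theorem pow_three_mul_le_of_isUnit_coord (hk : ν + 1 ≤ k)
    (hdual : ∀ i, ∃ y, (∀ z, polar q y z = (p : ℤ_[p]) ^ ν * z i) ∧ (p : ℤ_[p]) ^ ν ∣ q y)
    {x : Fin 4 → ℤ_[p]} {i : Fin 4} (hxi : IsUnit (x i)) (hx : (p : ℤ_[p]) ^ (ν + 1) ∣ q x - n) :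
    p ^ (3 * k) ≤ p ^ (ν + 2) * (solutionsMod q n k).ncard := by
  rcases forall_pow_dvd_or_exists_associated (polar q x) ((ν + 1) / 2) with
    hpolar | ⟨a, ha, hpolar, e, he⟩
  · obtain ⟨y, hypolar, hy⟩ := hdual i
    have hxy : Associated ((p : ℤ_[p]) ^ ν) (polar q x y) := by
      rw [polar_comm, hypolar]
      exact associated_mul_unit_right _ _ hxi
    refine pow_three_mul_le_of_order le_rfl hk hx hy hxy hpolar fun z => ?_
    rw [hypolar]
    exact (pow_dvd_pow _ (by lia)).mul_right _
  · exact pow_three_mul_le_of_associated_polar (by lia) (by lia)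
      ((pow_dvd_pow _ (by lia)).trans hx) hpolar he

theorem pow_three_mul_le_of_isotropic (hk : ν + 1 ≤ k)
    (hdual : ∀ i, ∃ y, (∀ z, polar q y z = (p : ℤ_[p]) ^ ν * z i) ∧ (p : ℤ_[p]) ^ ν ∣ q y)
    {x v : Fin 4 → ℤ_[p]} {i : Fin 4} (hvi : IsUnit (v i)) (hv : q v = 0) (hx : q x = n) :
    p ^ (3 * k) ≤ p ^ (ν + 2) * (solutionsMod q n k).ncard := by
  have hxv : q (x + v) - n = polar q x v := by rw [QuadraticMap.map_add (⇑q), hv, hx]; ring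
  rcases forall_pow_dvd_or_exists_associated (polar q x) ((ν + 1) / 2) with
    hxpolar | ⟨a, ha, hxpolar, e, he⟩
  · rcases pow_dvd_or_exists_associated (polar q x v) (ν + 1) with hdvd | ⟨c, hc, hassoc⟩
    · rcases isUnit_or_dvd (x i) with hxi | hxi
      · exact pow_three_mul_le_of_isUnit_coord hk hdual hxi (by simp [hx])
      · have hxvi : IsUnit (x i + v i) := add_comm (v i) (x i) ▸ isUnit_add_of_dvd hvi hxi
        exact pow_three_mul_le_of_isUnit_coord hk hdual hxvi (by rwa [hxv])
    · have hxpolar' {m} (hm : m ≤ (c + 1) / 2) (z) : (p : ℤ_[p]) ^ m ∣ polar q x z :=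
        (pow_dvd_pow _ (by lia)).trans (hxpolar z)
      rcases forall_pow_dvd_or_exists_associated (polar q v) ((c + 1) / 2) with
        hvpolar | ⟨m, hm, hvpolar, e, he⟩
      · exact pow_three_mul_le_of_order (by lia) hk (by simp [hx]) (by simp [hv]) hassoc
          (hxpolar' le_rfl) hvpolar
      · have hpolar (z) : polar q (x + v) z = polar q v z + polar q x z := by
          rw [polar_add_left, add_comm]
        refine pow_three_mul_le_of_associated_polar (a := m) (x := x + v) (e := e) (by lia) (by lia)
          ?_ (fun z => ?_) ?_
        · exact hxv ▸ (pow_dvd_pow _ (by lia)).trans hassoc.dvd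
        · exact hpolar z ▸ dvd_add (hvpolar z) (hxpolar' hm.le z)
        · exact hpolar e ▸ associated_pow_add he (hxpolar' hm e)
  · exact pow_three_mul_le_of_associated_polar (by lia) (by lia) (by simp [hx]) hxpolar he

end Quaternary

/-! ### Gram matrices and levels -/

section GramMatrix

variable {R S : Type*} [CommRing R] [CommRing S] {A : Matrix (Fin 4) (Fin 4) ℤ}

theorem Qval_map (f : R →+* S) (A : Matrix (Fin 4) (Fin 4) ℤ) (x : Fin 4 → R) :
    Qval A (f ∘ x) = f (Qval A x) := by
  simp [Qval]

/-- The quadratic form with Gram matrix `A`, over any commutative ring: `Qval A` as a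
`QuadraticForm`, whose polar form is given by `A`. Since `2` need not be invertible, it is written
in terms of the coefficients of the form. -/
def gramForm (R : Type*) [CommRing R] (A : Matrix (Fin 4) (Fin 4) ℤ) :
    QuadraticForm R (Fin 4 → R) :=
  ∑ i, ((A i i / 2 : ℤ) : R) • proj i i + ∑ i, ∑ j ∈ Finset.Ioi i, ((A i j : ℤ) : R) • proj i j

theorem gramForm_apply (A : Matrix (Fin 4) (Fin 4) ℤ) (x : Fin 4 → R) :
    gramForm R A x = Qval A x := by
  simp [gramForm, Qval, pow_two]

theorem polar_gramForm (hA : IsGram A) (x y : Fin 4 → R) :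
    polar (gramForm R A) x y = x ⬝ᵥ A.map (Int.cast : ℤ → R) *ᵥ y := by
  let f (j i : Fin 4) : R := A i j * (x i * y j)
  have hdiag (i) : ((A i i / 2 : ℤ) : R) * (2 * (x i * y i)) = f i i := by
    have htwo : ((A i i : ℤ) : R) = (A i i / 2 : ℤ) * 2 := by
      exact_mod_cast congrArg (Int.cast (R := R)) (Int.ediv_mul_cancel (hA.2 i)).symm
    simp only [f, htwo, mul_assoc]
  have hoff (i j) : ((A i j : ℤ) : R) * (x i * y j + y i * x j) = f j i + f i j := by
    simp only [f, hA.1.apply i j]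
    ring
  calc polar (gramForm R A) x y
      = ∑ i, ((A i i / 2 : ℤ) : R) * (2 * (x i * y i)) +
          ∑ i, ∑ j ∈ Finset.Ioi i, ((A i j : ℤ) : R) * (x i * y j + y i * x j) := by
        simp only [polar, gramForm_apply, Qval, Pi.add_apply, ← Finset.sum_add_distrib,
          ← Finset.sum_sub_distrib, add_sub_add_comm]
        exact Finset.sum_congr rfl fun i _ =>
          congrArg₂ (· + ·) (by ring) (Finset.sum_congr rfl fun j _ => by ring)
    _ = ∑ i, (f i i + ∑ j ∈ {i}ᶜ, f j i) := by
        simp only [hdiag, hoff]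
        rw [Finset.sum_sum_Ioi_add_eq_sum_sum_off_diag f, Finset.sum_add_distrib]
    _ = ∑ i, ∑ j, f j i :=
        Finset.sum_congr rfl fun i _ => (Fintype.sum_eq_add_sum_compl i (f · i)).symm
    _ = x ⬝ᵥ A.map (Int.cast : ℤ → R) *ᵥ y := by
        simp only [dotProduct, Matrix.mulVec, Finset.mul_sum,
          Matrix.map_apply, f, mul_left_comm]

theorem PosDefQF.det_ne_zero (hpd : PosDefQF A) : A.det ≠ 0 := by
  have hdet : ((A.det : ℤ) : ℝ) = (A.map (Int.cast : ℤ → ℝ)).det :=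
    (Int.castRingHom ℝ).map_det A
  exact Int.cast_ne_zero.1 (hdet ▸ hpd.det_pos.ne')

theorem IsLevel.exists_mul_eq_smul_one {N : ℕ} (hdet : A.det ≠ 0) (hN : IsLevel A N) :
    ∃ B : Matrix (Fin 4) (Fin 4) ℤ, A * B = (N : ℤ) • 1 ∧ ∀ i, 2 ∣ B i i := by
  obtain ⟨-, ⟨B, hB, hBdiag⟩, -⟩ := hN
  refine ⟨B, Matrix.map_injective (Int.cast_injective (α := ℚ)) ?_, hBdiag⟩
  have hdetQ : IsUnit (A.map (Int.cast : ℤ → ℚ)).det := by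
    have hmap := (Int.castRingHom ℚ).map_det A
    rw [isUnit_iff_ne_zero]
    exact hmap ▸ Int.cast_ne_zero.2 hdet
  have hmul : (A * B).map (Int.cast : ℤ → ℚ) = A.map Int.cast * B.map Int.cast :=
    Matrix.map_mul (f := Int.castRingHom ℚ)
  beta_reduce
  rw [hmul, hB, Matrix.mul_smul, Matrix.mul_nonsing_inv _ hdetQ]
  ext i j
  simp only [Matrix.smul_apply, Matrix.map_apply, Matrix.one_apply]
  split_ifs <;> simp

variable {p : ℕ} [Fact p.Prime]

theorem exists_isUnit_coord_of_isotropic {x : Fin 4 → ℚ_[p]} (hx : x ≠ 0) (hq : Qval A x = 0) :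
    ∃ v : Fin 4 → ℤ_[p], Qval A v = 0 ∧ ∃ i, IsUnit (v i) := by
  obtain ⟨i, hmax⟩ := Finite.exists_max fun i => ‖x i‖
  obtain ⟨j, hj⟩ := Function.ne_iff.1 hx
  have hxi : 0 < ‖x i‖ := (norm_pos_iff.2 hj).trans_le (hmax j)
  let v (j : Fin 4) : ℤ_[p] :=
    ⟨(x i)⁻¹ * x j, by rw [norm_mul, norm_inv, inv_mul_le_one₀ hxi]; exact hmax j⟩
  refine ⟨v, Subtype.coe_injective ?_, i, ?_⟩
  · have hv : PadicInt.Coe.ringHom ∘ v = (x i)⁻¹ • x := rfl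
    have hmap := Qval_map PadicInt.Coe.ringHom A v
    rw [hv, ← gramForm_apply, QuadraticMap.map_smul, gramForm_apply, hq, smul_zero] at hmap
    exact hmap.symm
  · have hvi : v i = 1 := Subtype.ext (inv_mul_cancel₀ (norm_pos_iff.1 hxi))
    exact hvi ▸ isUnit_one

theorem IsLevel.exists_polar_eq_pow_mul_apply (hA : IsGram A) (hdet : A.det ≠ 0) {N : ℕ}
    (hN : IsLevel A N) (i : Fin 4) :
    ∃ y, (∀ z, polar (gramForm ℤ_[p] A) y z = (p : ℤ_[p]) ^ N.factorization p * z i) ∧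
      (p : ℤ_[p]) ^ N.factorization p ∣ gramForm ℤ_[p] A y := by
  obtain ⟨B, hAB, hB⟩ := hN.exists_mul_eq_smul_one hdet
  obtain ⟨u, hu⟩ := (associated_pow_factorization_natCast (p := p) hN.1.ne').symm
  obtain ⟨b, hb⟩ := hB i
  let column : Fin 4 → ℤ_[p] := fun j => (B j i : ℤ_[p])
  have hcolumn : A.map (Int.cast : ℤ → ℤ_[p]) *ᵥ column = Pi.single i (N : ℤ_[p]) := by
    ext j
    have hji := congr(((($hAB j i : ℤ)) : ℤ_[p]))
    simpa [Matrix.mul_apply, Matrix.mulVec, dotProduct, Matrix.one_apply, Pi.single_apply] using hji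
  have hpolar (z) : polar (gramForm ℤ_[p] A) ((u : ℤ_[p]) • column) z =
      (p : ℤ_[p]) ^ N.factorization p * z i := by
    rw [polar_comm, polar_smul_right, polar_gramForm hA, hcolumn, dotProduct_single, ← hu,
      smul_eq_mul]
    ring
  refine ⟨(u : ℤ_[p]) • column, hpolar, u * b, ?_⟩
  have hself := hpolar ((u : ℤ_[p]) • column)
  rw [polar_self] at hself
  apply mul_left_cancel₀ (two_ne_zero (α := ℤ_[p]))
  simp only [column, Pi.smul_apply, hb, Int.cast_mul, Int.cast_ofNat, smul_eq_mul,
    nsmul_eq_mul, Nat.cast_ofNat] at hself ⊢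
  linear_combination hself

theorem localCount_eq_ncard_solutionsMod (n k : ℕ) :
    localCount A p n k = (solutionsMod (gramForm ℤ_[p] A) (n : ℤ_[p]) k).ncard := by
  refine congrArg Set.ncard (Set.ext fun x => ?_)
  have hmem (y : Fin 4 → ℤ_[p]) : Qval A (reduceMod (Fin 4) k y) = n ↔
      (p : ℤ_[p]) ^ k ∣ gramForm ℤ_[p] A y - n := by
    rw [← toZModPow_eq_zero_iff, map_sub, map_natCast, sub_eq_zero, gramForm_apply, ← Qval_map]
    rfl
  constructor
  · intro hx
    obtain ⟨y, rfl⟩ := reduceMod_surjective k x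
    exact ⟨y, (hmem y).1 hx, rfl⟩
  · rintro ⟨y, hy, rfl⟩
    exact (hmem y).2 hy

/-! ### Existence of the local density -/

theorem ncard_Qval_eq_sq_mul (A : Matrix (Fin 4) (Fin 4) ℤ) (u : Rˣ) (a : R) :
    {x : Fin 4 → R | Qval A x = (u : R) ^ 2 * a}.ncard = {x : Fin 4 → R | Qval A x = a}.ncard := by
  have hpreimage : {x : Fin 4 → R | Qval A x = a} =
      (u • ·) ⁻¹' {x : Fin 4 → R | Qval A x = (u : R) ^ 2 * a} := by
    ext x
    rw [Set.mem_preimage, Set.mem_ofPred_eq, Set.mem_ofPred_eq, Units.smul_def, ← gramForm_apply,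
      ← gramForm_apply, QuadraticMap.map_smul, smul_eq_mul, ← pow_two,
      ((u.isUnit.pow 2).isRegular.left).eq_iff]
  rw [hpreimage, Set.ncard_preimage_of_injective_subset_range (MulAction.injective u)]
  simp [(MulAction.surjective u).range_eq]

theorem ncard_Qval_mul_card_pow_three [Finite R] {f : R →+* S} (hf : Function.Surjective f)
    (a : R) (hsq : ∀ r, f r = f a → ∃ u : Rˣ, r = (u : R) ^ 2 * a) :
    {x : Fin 4 → R | Qval A x = a}.ncard * Nat.card S ^ 3 =
      {x : Fin 4 → S | Qval A x = f a}.ncard * Nat.card R ^ 3 := by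
  have := Finite.of_surjective f hf
  have hfibre : (f ⁻¹' {f a}).ncard * Nat.card S = Nat.card R := by
    simpa using ncard_preimage_mul_card (f := f.toAddMonoidHom) hf {f a}
  have hlift := ncard_preimage_mul_card (f := f.toAddMonoidHom.compLeft (Fin 4))
    hf.comp_left {x | Qval A x = f a}
  have hlevel (r) (hr : r ∈ f ⁻¹' {f a}) :
      (Qval A ⁻¹' {r}).ncard = {x : Fin 4 → R | Qval A x = a}.ncard := by
    obtain ⟨u, rfl⟩ := hsq r hr
    exact ncard_Qval_eq_sq_mul A u a
  have hpreimage : f.toAddMonoidHom.compLeft (Fin 4) ⁻¹' {x | Qval A x = f a} =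
      Qval A ⁻¹' (f ⁻¹' {f a}) :=
    Set.ext fun x => Eq.congr_left (Qval_map f A x)
  rw [hpreimage, ncard_preimage_eq_ncard_mul hlevel, Nat.card_fun, Nat.card_fun,
    Nat.card_fin] at hlift
  refine Nat.eq_of_mul_eq_mul_right (Nat.card_pos (α := R)) ?_
  linear_combination
    hlift + {x : Fin 4 → R | Qval A x = a}.ncard * Nat.card S ^ 3 * hfibre.symm

theorem exists_unit_sq_mul_sub_dvd {n y : ℤ_[p]} {v k : ℕ} (hv : 2 * n ∣ (p : ℤ_[p]) ^ v)
    (hk : 2 * v + 1 ≤ k) (hy : (p : ℤ_[p]) ^ k ∣ y - n) :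
    ∃ u : ℤ_[p]ˣ, (p : ℤ_[p]) ^ (k + 1) ∣ y - (u : ℤ_[p]) ^ 2 * n := by
  obtain ⟨w, hw⟩ := hv
  obtain ⟨c, hc⟩ := hy
  obtain ⟨j, rfl⟩ := Nat.exists_eq_add_of_le (show v ≤ k by lia)
  have hunit : IsUnit (1 + (p : ℤ_[p]) ^ j * (w * c)) :=
    isUnit_add_of_dvd isUnit_one (dvd_mul_of_dvd_left (dvd_pow_self _ (by lia)) _)
  have herror : y - (1 + (p : ℤ_[p]) ^ j * (w * c)) ^ 2 * n =
      (p : ℤ_[p]) ^ (j + j) * -((w * c) ^ 2 * n) := by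
    linear_combination hc + (p : ℤ_[p]) ^ j * c * hw
  refine ⟨hunit.unit, ?_⟩
  rw [hunit.unit_spec, herror]
  exact dvd_mul_of_dvd_left (pow_dvd_pow _ (by lia)) _

theorem exists_eq_sq_mul_of_castHom_eq {n v k : ℕ} (hv : 2 * (n : ℤ_[p]) ∣ (p : ℤ_[p]) ^ v)
    (hk : 2 * v + 1 ≤ k) {r : ZMod (p ^ (k + 1))}
    (hr : ZMod.castHom (pow_dvd_pow p k.le_succ) (ZMod (p ^ k)) r = n) :
    ∃ u : (ZMod (p ^ (k + 1)))ˣ, r = (u : ZMod (p ^ (k + 1))) ^ 2 * n := by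
  obtain ⟨y, rfl⟩ := ZMod.ringHom_surjective (PadicInt.toZModPow (p := p) (k + 1)) r
  have hy : (p : ℤ_[p]) ^ k ∣ y - n := by
    rw [← toZModPow_eq_zero_iff, map_sub, map_natCast, sub_eq_zero, ← hr]
    exact (PadicInt.cast_toZModPow k (k + 1) k.le_succ y).symm
  obtain ⟨u, hu⟩ := exists_unit_sq_mul_sub_dvd hv hk hy
  refine ⟨Units.map (PadicInt.toZModPow (k + 1)).toMonoidHom u, ?_⟩
  rw [← toZModPow_eq_zero_iff, map_sub, sub_eq_zero] at hu
  simpa using hu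

theorem localCount_succ {n v k : ℕ} (hv : 2 * (n : ℤ_[p]) ∣ (p : ℤ_[p]) ^ v)
    (hk : 2 * v + 1 ≤ k) : localCount A p n (k + 1) = p ^ 3 * localCount A p n k := by
  have hcount := ncard_Qval_mul_card_pow_three (A := A)
    (ZMod.castHom_surjective (pow_dvd_pow p k.le_succ)) (n : ZMod (p ^ (k + 1)))
    fun r hr => exists_eq_sq_mul_of_castHom_eq hv hk (hr.trans (map_natCast _ n))
  rw [map_natCast, Nat.card_zmod, Nat.card_zmod] at hcount
  have hp : 0 < (p ^ k) ^ 3 := pow_pos (pow_pos (Fact.out : p.Prime).pos k) 3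
  refine Nat.eq_of_mul_eq_mul_right hp (hcount.trans ?_)
  change localCount A p n k * (p ^ (k + 1)) ^ 3 = _
  ring

theorem exists_tendsto_localCount_div (A : Matrix (Fin 4) (Fin 4) ℤ) {n : ℕ} (hn : n ≠ 0) :
    ∃ β : ℝ, Filter.Tendsto (fun k => (localCount A p n k : ℝ) / (p : ℝ) ^ (3 * k))
      Filter.atTop (nhds β) := by
  let v := (2 * n).factorization p
  have hv : 2 * (n : ℤ_[p]) ∣ (p : ℤ_[p]) ^ v := by
    exact_mod_cast (associated_pow_factorization_natCast (p := p)
      (mul_ne_zero two_ne_zero hn)).dvd'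
  have hp : (p : ℝ) ≠ 0 := by exact_mod_cast (Fact.out : p.Prime).ne_zero
  refine ⟨(localCount A p n (2 * v + 1) : ℝ) / (p : ℝ) ^ (3 * (2 * v + 1)),
    tendsto_const_nhds.congr' ?_⟩
  filter_upwards [Filter.eventually_ge_atTop (2 * v + 1)] with k hk
  induction k, hk using Nat.le_induction with
  | base => rfl
  | succ k hk ih =>
    rw [ih, localCount_succ hv hk]
    push_cast
    field_simp
    ring

theorem local_density_isotropic_two_general (A : Matrix (Fin 4) (Fin 4) ℤ) (N n : ℕ)
    (hA : IsGram A) (hdet : A.det ≠ 0) (hN : IsLevel A N) (hn : n ≠ 0)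
    (hiso : ∃ x : Fin 4 → ℚ_[p], x ≠ 0 ∧ Qval A x = 0)
    (h : ∃ x : Fin 4 → ℤ_[p], Qval A x = (n : ℤ_[p])) :
    DensityBound A p n ((p : ℝ) ^ (-(2 : ℝ) - (N.factorization p : ℝ))) := by
  obtain ⟨β, hβ⟩ := exists_tendsto_localCount_div (p := p) A hn
  refine ⟨β, hβ, ge_of_tendsto hβ ?_⟩
  obtain ⟨x₀, hx₀, hqx₀⟩ := hiso
  obtain ⟨v, hv, i, hvi⟩ := exists_isUnit_coord_of_isotropic hx₀ hqx₀
  obtain ⟨x, hx⟩ := h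
  filter_upwards [Filter.eventually_ge_atTop (N.factorization p + 1)] with k hk
  have hcount := pow_three_mul_le_of_isotropic hk (hN.exists_polar_eq_pow_mul_apply hA hdet)
    hvi ((gramForm_apply A v).trans hv) ((gramForm_apply A x).trans hx)
  rw [← localCount_eq_ncard_solutionsMod] at hcount
  have hp : (0 : ℝ) < p := by exact_mod_cast (Fact.out : p.Prime).pos
  have hexponent : (p : ℝ) ^ (-(2 : ℝ) - (N.factorization p : ℝ)) =
      ((p : ℝ) ^ (N.factorization p + 2))⁻¹ := by
    rw [← Real.rpow_natCast, ← Real.rpow_neg hp.le]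
    push_cast
    ring_nf
  rw [hexponent, le_div_iff₀ (by positivity), inv_mul_le_iff₀ (by positivity)]
  exact_mod_cast hcount

end GramMatrix

/-- Isotropic case bound (p = 2): if `Q` is isotropic over `ℚ_2` and `n` is
represented over `ℤ_2` then `β_2(Q;n) ≥ 2^(-2 - ord_2(N(Q)))`. -/
theorem local_density_isotropic_two
    (A : Matrix (Fin 4) (Fin 4) ℤ) (N n : ℕ)
    (hA : IsGram A) (hprim : IsPrimitiveQF A) (hpd : PosDefQF A)
    (hN : IsLevel A N) (hn : 0 < n)
    (hiso : ∃ x : Fin 4 → ℚ_[2], x ≠ 0 ∧ Qval A x = 0)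
    (h : ∃ x : Fin 4 → ℤ_[2], Qval A x = (n : ℤ_[2])) :
    DensityBound A 2 n ((2 : ℝ) ^ (-(2 : ℝ) - (N.factorization 2 : ℝ))) :=
  local_density_isotropic_two_general A N n hA hpd.det_ne_zero hN hn.ne' hiso h
end

section
/- Let Q be a primitive positive-definite quaternary integer-valued quadratic form, let p be an odd prime, and let n be a positive integer with p ∤ n. If n is represented by Q over ℤ_p (i.e. there exists x ∈ ℤ_p⁴ with Q(x) = n), then the local density β_p(Q;n) exists and satisfies β_p(Q;n) ≥ 1 − 1/p. -/
open scoped BigOperators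

/-!
For a unit `c`, the normalized number of solutions of `Q x = c` modulo `p ^ k` does not depend on
`k ≥ 1`: squaring is bijective on the units `≡ 1` modulo `p`, a group of odd order, so scaling by
these units permutes the fibers of `Q` over the residues `≡ c` modulo `p`, which are therefore all
of the same size. This reduces the claim to `𝔽_p`. There, let `δ Q` be the normalized number of
solutions of `Q x = c`, and let `χ` be the quadratic character. Evaluating a character sum gives
`δ (⟨a, b⟩ ⊥ Q) - 1 = χ (-a * b) / p * (δ Q - 1)` for `a, b ≠ 0`, and `δ Q ∈ [0, 2]` because
`⟨a⟩` represents each value at most twice. Hence a form of rank at least two satisfies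
`|δ - 1| ≤ 1 / p`, and a form of rank one that represents `c` has `δ = 2`.
-/

section SolutionDensity

variable {R S M N : Type*} [CommRing R] [CommRing S] [AddCommGroup M] [AddCommGroup N]
  [Module R M] [Module S N]

/-- The normalized number of solutions of `Q x = c` over a finite ring `R`: the ratio of the number
of solutions to its expected value `|M| / |R|`. For `R = ℤ/p^k` and `M = R^m` this is
`#{x | Q x = c} / p^((m - 1) * k)`, whose limit in `k` is the local density. -/
noncomputable def solutionDensity (Q : QuadraticForm R M) (c : R) : ℝ :=
  Nat.card R * Nat.card {x // Q x = c} / Nat.card M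

theorem solutionDensity_congr {M' : Type*} [AddCommGroup M'] [Module R M'] {Q : QuadraticForm R M}
    {Q' : QuadraticForm R M'} (h : Q.Equivalent Q') (c : R) :
    solutionDensity Q c = solutionDensity Q' c := by
  obtain ⟨e⟩ := h
  have hfiber : {x // Q x = c} ≃ {y // Q' y = c} :=
    e.toEquiv.subtypeEquiv fun x => by rw [← e.map_app x]; rfl
  rw [solutionDensity, solutionDensity, Nat.card_congr hfiber, Nat.card_congr e.toEquiv]

theorem natCard_subtype_comp_of_surjective {G H : Type*} [AddGroup G] [AddGroup H] {f : G →+ H}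
    (hf : Function.Surjective f) (P : H → Prop) :
    Nat.card {x // P (f x)} = Nat.card {y // P y} * Nat.card f.ker := by
  rw [← Nat.card_prod]
  exact Nat.card_congr <|
    (Equiv.sigmaSubtypeFiberEquivSubtype f (q := P) fun _ => Iff.rfl).symm.trans <|
      (Equiv.sigmaCongrRight fun y : Subtype P => f.fiberEquivKerOfSurjective hf y.1).trans
        (Equiv.sigmaEquivProd _ _)

theorem natCard_eq_mul_natCard_ker {G H : Type*} [AddGroup G] [AddGroup H] {f : G →+ H}
    (hf : Function.Surjective f) : Nat.card G = Nat.card H * Nat.card f.ker := by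
  simpa only [Nat.card_congr (Equiv.subtypeUnivEquiv fun _ => trivial)] using
    natCard_subtype_comp_of_surjective hf fun _ => True

theorem natCard_ker_unitsMap (f : R →+* S) [IsLocalHom f] :
    Nat.card (Units.map (f : R →* S)).ker = Nat.card (f : R →+ S).ker := by
  have hmem (u : (Units.map (f : R →* S)).ker) : f (u : Rˣ) = 1 := congrArg Units.val u.2
  refine Nat.card_eq_of_bijective
    (fun u => ⟨((u : Rˣ) : R) - 1, by simp [AddMonoidHom.mem_ker, hmem]⟩) ⟨?_, ?_⟩
  · intro u v huv
    exact Subtype.ext (Units.ext (sub_left_injective (congrArg Subtype.val huv)))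
  · rintro ⟨a, ha⟩
    have hfa : f (1 + a) = 1 := by
      rw [map_add, map_one, show f a = 0 from ha, add_zero]
    obtain ⟨u, hu⟩ := IsUnit.of_map f (1 + a) (hfa ▸ isUnit_one)
    exact ⟨⟨u, Units.ext (by simp [hu, hfa])⟩, Subtype.ext (by simp [hu])⟩

theorem exists_units_sq_mul_eq (f : R →+* S) [IsLocalHom f]
    (hodd : Odd (Nat.card (f : R →+ S).ker)) {c a : R} (hc : IsUnit c) (ha : f a = f c) :
    ∃ u : Rˣ, u ^ 2 * c = a := by
  obtain ⟨c, rfl⟩ := hc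
  obtain ⟨a, rfl⟩ := IsUnit.of_map f a (ha ▸ c.isUnit.map f)
  have hker : a / c ∈ (Units.map (f : R →* S)).ker := by
    rw [MonoidHom.mem_ker, map_div, div_eq_one]
    exact Units.ext ha
  have hcop : (Nat.card (Units.map (f : R →* S)).ker).Coprime 2 := by
    rwa [natCard_ker_unitsMap, Nat.coprime_two_right]
  obtain ⟨u, hu⟩ := hcop.pow_left_bijective.2 ⟨a / c, hker⟩
  have hsq : (u : Rˣ) ^ 2 * c = a := eq_div_iff_mul_eq'.1 (congrArg Subtype.val hu)
  exact ⟨u, congrArg Units.val hsq⟩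

theorem natCard_fiber_units_sq_mul (Q : QuadraticForm R M) (u : Rˣ) (c : R) :
    Nat.card {x // Q x = u ^ 2 * c} = Nat.card {x // Q x = c} := by
  refine (Nat.card_congr ((MulAction.toPerm u).subtypeEquiv fun x => ?_)).symm
  rw [MulAction.toPerm_apply, Units.smul_def, QuadraticMap.map_smul, smul_eq_mul, ← sq,
    ← Units.val_pow_eq_pow_val, Units.mul_right_inj]

theorem natCard_fiber_comp [Finite R] [Finite M] (f : R →+* S) [IsLocalHom f]
    (hodd : Odd (Nat.card (f : R →+ S).ker)) (Q : QuadraticForm R M) {c : R} (hc : IsUnit c) :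
    Nat.card {x // f (Q x) = f c} = Nat.card (f : R →+ S).ker * Nat.card {x // Q x = c} := by
  have := Fintype.ofFinite {a // f a = f c}
  have hfiber (a : {a // f a = f c}) : Nat.card {x // Q x = a} = Nat.card {x // Q x = c} := by
    obtain ⟨u, hu⟩ := exists_units_sq_mul_eq f hodd hc a.2
    rw [← hu, natCard_fiber_units_sq_mul]
  calc Nat.card {x // f (Q x) = f c}
      = Nat.card (Σ a : {a // f a = f c}, {x // Q x = a}) :=
        Nat.card_congr (Equiv.sigmaSubtypeFiberEquivSubtype Q (q := fun a => f a = f c)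
          fun _ => Iff.rfl).symm
    _ = Nat.card {a // f a = f c} * Nat.card {x // Q x = c} := by
        rw [Nat.card_sigma, Finset.sum_congr rfl fun a _ => hfiber a, Finset.sum_const,
          Finset.card_univ, smul_eq_mul, Nat.card_eq_fintype_card (α := {a // f a = f c})]
    _ = Nat.card (f : R →+ S).ker * Nat.card {x // Q x = c} :=
        congrArg (· * _) (Nat.card_congr ((f : R →+ S).fiberEquivKer c))

theorem solutionDensity_eq_of_surjective [Finite R] [Finite M] (f : R →+* S) [IsLocalHom f]
    (hf : Function.Surjective f) (hodd : Odd (Nat.card (f : R →+ S).ker)) (g : M →+ N)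
    (hg : Function.Surjective g) {Q : QuadraticForm R M} {Q' : QuadraticForm S N}
    (hQ : ∀ x, Q' (g x) = f (Q x)) {c : R} (hc : IsUnit c) :
    solutionDensity Q c = solutionDensity Q' (f c) := by
  have hcount : (Nat.card (f : R →+ S).ker * Nat.card {x // Q x = c} : ℝ) =
      Nat.card {y // Q' y = f c} * Nat.card g.ker := by
    have := natCard_subtype_comp_of_surjective hg fun y => Q' y = f c
    simp only [hQ] at this
    exact_mod_cast (natCard_fiber_comp f hodd Q hc).symm.trans this
  have hM : (Nat.card g.ker : ℝ) ≠ 0 := Nat.cast_ne_zero.2 Nat.card_pos.ne'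
  rw [solutionDensity, solutionDensity, natCard_eq_mul_natCard_ker hg,
    natCard_eq_mul_natCard_ker (f := (f : R →+ S)) hf, Nat.cast_mul, Nat.cast_mul, mul_assoc,
    hcount, ← mul_assoc, mul_div_mul_right _ _ hM]

end SolutionDensity

section OrthogonalSum

variable {R M₁ M₂ : Type*} [CommRing R] [AddCommGroup M₁] [AddCommGroup M₂] [Module R M₁]
  [Module R M₂]

theorem natCard_prod_fiber [Finite M₁] [Fintype M₂] (Q₁ : QuadraticForm R M₁)
    (Q₂ : QuadraticForm R M₂) (c : R) :
    Nat.card {x // (Q₁.prod Q₂) x = c} = ∑ y, Nat.card {x // Q₁ x = c - Q₂ y} := by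
  rw [← Nat.card_sigma]
  refine Nat.card_congr <| Equiv.trans ?_ <|
    Equiv.subtypeProdEquivSigmaSubtype fun y x => Q₁ x = c - Q₂ y
  exact (Equiv.prodComm M₁ M₂).subtypeEquiv fun x => eq_sub_iff_add_eq.symm

theorem solutionDensity_prod [Finite M₁] [Fintype M₂] (Q₁ : QuadraticForm R M₁)
    (Q₂ : QuadraticForm R M₂) (c : R) :
    solutionDensity (Q₁.prod Q₂) c = 𝔼 y, solutionDensity Q₁ (c - Q₂ y) := by
  simp only [solutionDensity, natCard_prod_fiber, Nat.card_prod, ← Finset.expect_div,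
    ← Finset.mul_expect, Fintype.expect_eq_sum_div_card, Nat.card_eq_fintype_card (α := M₂)]
  push_cast
  ring

theorem expect_boole_eq_solutionDensity_div [Finite R] [Fintype M₁] [DecidableEq R]
    (Q : QuadraticForm R M₁) (c : R) :
    𝔼 x, (if Q x = c then 1 else 0 : ℝ) = solutionDensity Q c / Nat.card R := by
  have hR : (Nat.card R : ℝ) ≠ 0 := Nat.cast_ne_zero.2 Nat.card_pos.ne'
  rw [Fintype.expect_eq_sum_div_card, Finset.sum_boole, solutionDensity, mul_div_assoc,
    mul_div_cancel_left₀ _ hR, Nat.card_eq_fintype_card, Nat.card_eq_fintype_card,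
    Fintype.card_subtype]

theorem weightedSumSquares_equivalent_prod {ι : Type*} [Fintype ι] [DecidableEq ι] (w : ι → R)
    (i : ι) :
    (QuadraticMap.weightedSumSquares R w).Equivalent
      ((w i • QuadraticMap.sq).prod
        (QuadraticMap.weightedSumSquares R fun j : {j // j ≠ i} => w j)) :=
  ⟨{ toFun := Equiv.funSplitAt i R
     invFun := (Equiv.funSplitAt i R).symm
     left_inv := (Equiv.funSplitAt i R).left_inv
     right_inv := (Equiv.funSplitAt i R).right_inv
     map_add' := fun _ _ => rfl
     map_smul' := fun _ _ => rfl
     map_app' := fun x => by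
      simp only [QuadraticMap.prod_apply, QuadraticMap.weightedSumSquares_apply, smul_apply,
        QuadraticMap.sq_apply]
      exact (Fintype.sum_eq_add_sum_subtype_ne (fun j => w j • (x j * x j)) i).symm }⟩

theorem exists_weight_ne_zero_of_represented {ι : Type*} [Fintype ι] {w : ι → R} {c : R}
    (hc : c ≠ 0) (h : ∃ x, QuadraticMap.weightedSumSquares R w x = c) : ∃ i, w i ≠ 0 := by
  obtain ⟨x, rfl⟩ := h
  rw [QuadraticMap.weightedSumSquares_apply] at hc
  obtain ⟨i, -, hi⟩ := Finset.exists_ne_zero_of_sum_ne_zero hc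
  exact ⟨i, left_ne_zero_of_smul hi⟩

theorem equivalent_prod_assoc {M₃ : Type*} [AddCommGroup M₃] [Module R M₃]
    (Q₁ : QuadraticForm R M₁) (Q₂ : QuadraticForm R M₂) (Q₃ : QuadraticForm R M₃) :
    (Q₁.prod (Q₂.prod Q₃)).Equivalent ((Q₁.prod Q₂).prod Q₃) :=
  ⟨{ (LinearEquiv.prodAssoc R M₁ M₂ M₃).symm with
     map_app' := fun _ => add_assoc _ _ _ }⟩

theorem solutionDensity_nonneg (Q : QuadraticForm R M₁) (c : R) : 0 ≤ solutionDensity Q c := by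
  unfold solutionDensity
  positivity

end OrthogonalSum

section FiniteField

variable {F : Type*} [Field F] [Fintype F] [DecidableEq F]

theorem sum_comp_sq (hF : ringChar F ≠ 2) (f : F → ℤ) :
    ∑ x, f (x ^ 2) = ∑ u, (1 + quadraticChar F u) * f u := by
  rw [← Fintype.sum_fiberwise (fun x : F => x ^ 2)]
  refine Finset.sum_congr rfl fun u _ => ?_
  rw [Finset.sum_congr rfl fun x _ => congrArg f x.2, Finset.sum_const, Finset.card_univ,
    nsmul_eq_mul, add_comm, ← quadraticChar_card_sqrts hF, Set.toFinset_card]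
  rfl

theorem sum_quadraticChar_mul_add (hF : ringChar F ≠ 2) {a : F} (ha : a ≠ 0) (b : F) :
    ∑ u, quadraticChar F (a * u + b) = 0 := by
  rw [← quadraticChar_sum_zero hF]
  exact Fintype.sum_equiv ((Equiv.mulLeft₀ a ha).trans (Equiv.addRight b)) _ _ fun _ => rfl

theorem sum_quadraticChar_mul_quadraticChar_mul_add (hF : ringChar F ≠ 2) {a b : F} (ha : a ≠ 0)
    (hb : b ≠ 0) :
    ∑ u, quadraticChar F u * quadraticChar F (a * u + b) = -quadraticChar F a := by
  have hab : -(b / a) ≠ 0 := neg_ne_zero.2 (div_ne_zero hb ha)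
  -- Substituting `u = -(b / a) * s` turns the sum into a multiple of the Jacobi sum `J(χ, χ⁻¹)`.
  have hjacobi : ∑ s, quadraticChar F s * quadraticChar F (1 - s) = -quadraticChar F (-1) := by
    simpa only [jacobiSum, (quadraticChar_isQuadratic F).inv] using
      jacobiSum_nontrivial_inv (quadraticChar_ne_one hF)
  calc ∑ u, quadraticChar F u * quadraticChar F (a * u + b)
      = ∑ s, quadraticChar F (-(b / a) * s) * quadraticChar F (a * (-(b / a) * s) + b) :=
        (Fintype.sum_equiv (Equiv.mulLeft₀ _ hab) _ _ fun _ => rfl).symm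
    _ = ∑ s, quadraticChar F (-a) * (quadraticChar F s * quadraticChar F (1 - s)) := by
        refine Finset.sum_congr rfl fun s _ => ?_
        have hfactor : -(b / a) * s * (a * (-(b / a) * s) + b) =
            (b / a) ^ 2 * (-a * (s * (1 - s))) := by
          field_simp
          ring
        rw [← map_mul, hfactor, map_mul, quadraticChar_sq_one' (div_ne_zero hb ha), one_mul,
          map_mul, map_mul]
    _ = -quadraticChar F a := by
        rw [← Finset.mul_sum, hjacobi, mul_neg, ← map_mul, neg_mul_neg, mul_one]

theorem sum_quadraticChar_mul_sq_add (hF : ringChar F ≠ 2) {a : F} (ha : a ≠ 0) (b : F) :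
    ∑ x, quadraticChar F (a * x ^ 2 + b) =
      quadraticChar F a * ((if b = 0 then (Fintype.card F : ℤ) else 0) - 1) := by
  split_ifs with hb
  · have hsq (x : F) : quadraticChar F (a * x ^ 2) =
        quadraticChar F a * (1 - if x = 0 then 1 else 0) := by
      split_ifs with hx
      · simp [hx]
      · rw [map_mul, quadraticChar_sq_one' hx, sub_zero]
    simp only [hb, add_zero, hsq, ← Finset.mul_sum, Finset.sum_sub_distrib, Finset.sum_ite_eq',
      Finset.sum_const, Finset.card_univ, Finset.mem_univ, if_true, nsmul_one]
  · simp only [sum_comp_sq hF fun u => quadraticChar F (a * u + b), add_mul, one_mul,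
      Finset.sum_add_distrib, sum_quadraticChar_mul_add hF ha,
      sum_quadraticChar_mul_quadraticChar_mul_add hF ha hb]
    ring

theorem solutionDensity_smul_sq (hF : ringChar F ≠ 2) {a : F} (ha : a ≠ 0) (d : F) :
    solutionDensity (a • QuadraticMap.sq : QuadraticForm F F) d = 1 + quadraticChar F (a * d) := by
  have hroots (t : F) : (a • QuadraticMap.sq : QuadraticForm F F) t = d ↔ t ^ 2 = d / a := by
    rw [smul_apply, QuadraticMap.sq_apply, smul_eq_mul, eq_div_iff ha, sq, mul_comm]
  have hchar : quadraticChar F (a * d) = quadraticChar F (d / a) := by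
    rw [show a * d = a ^ 2 * (d / a) by field_simp, map_mul, quadraticChar_sq_one' ha, one_mul]
  have hcard : (Nat.card {t : F // t ^ 2 = d / a} : ℤ) = quadraticChar F (d / a) + 1 := by
    rw [← quadraticChar_card_sqrts hF, Set.toFinset_card, ← Nat.card_eq_fintype_card]
    rfl
  have hF₀ : (Nat.card F : ℝ) ≠ 0 := Nat.cast_ne_zero.2 Nat.card_pos.ne'
  rw [solutionDensity, mul_div_cancel_left₀ _ hF₀, hchar, add_comm]
  simp only [hroots]
  exact_mod_cast hcard

theorem solutionDensity_binary (hF : ringChar F ≠ 2) {a b : F} (ha : a ≠ 0) (hb : b ≠ 0) (d : F) :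
    solutionDensity ((a • QuadraticMap.sq).prod (b • QuadraticMap.sq) : QuadraticForm F (F × F)) d =
      1 + quadraticChar F (-(a * b)) * ((if d = 0 then 1 else 0) - 1 / Nat.card F) := by
  have hsum := sum_quadraticChar_mul_sq_add hF (neg_ne_zero.2 (mul_ne_zero ha hb)) (a * d)
  have harg (t : F) : a * (d - (b • QuadraticMap.sq : QuadraticForm F F) t) =
      -(a * b) * t ^ 2 + a * d := by
    rw [smul_apply, QuadraticMap.sq_apply, smul_eq_mul]
    ring
  have hF₀ : (Fintype.card F : ℝ) ≠ 0 := Nat.cast_ne_zero.2 Fintype.card_ne_zero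
  simp only [solutionDensity_prod, solutionDensity_smul_sq hF ha, harg, Finset.expect_add_distrib,
    Fintype.expect_const]
  simp only [Fintype.expect_eq_sum_div_card, ← Int.cast_sum, hsum, mul_eq_zero, ha, false_or,
    Nat.card_eq_fintype_card]
  split_ifs <;> push_cast <;> field_simp
  ring

variable {V : Type*} [AddCommGroup V] [Module F V]

theorem solutionDensity_binary_prod [Finite V] (hF : ringChar F ≠ 2) {a b : F} (ha : a ≠ 0)
    (hb : b ≠ 0) (Q : QuadraticForm F V) (c : F) :
    solutionDensity (((a • QuadraticMap.sq).prod (b • QuadraticMap.sq)).prod Q) c =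
      1 + quadraticChar F (-(a * b)) / Nat.card F * (solutionDensity Q c - 1) := by
  have := Fintype.ofFinite V
  simp only [solutionDensity_prod _ Q, solutionDensity_binary hF ha hb, sub_eq_zero,
    eq_comm (a := c), Finset.expect_add_distrib, ← Finset.mul_expect, Finset.expect_sub_distrib,
    Fintype.expect_const, expect_boole_eq_solutionDensity_div]
  ring

theorem abs_quadraticChar_le_one (u : F) : |(quadraticChar F u : ℝ)| ≤ 1 := by
  rcases quadraticChar_isQuadratic F u with h | h | h <;> simp [h]

end FiniteField

section FiniteFieldBounds

variable {F : Type*} [Field F] [Finite F] {V : Type*} [AddCommGroup V] [Module F V]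

theorem solutionDensity_smul_sq_prod_le_two [Finite V] (hF : ringChar F ≠ 2) {a : F} (ha : a ≠ 0)
    (Q : QuadraticForm F V) (c : F) :
    solutionDensity ((a • QuadraticMap.sq).prod Q) c ≤ 2 := by
  classical
  have := Fintype.ofFinite F
  have := Fintype.ofFinite V
  rw [solutionDensity_prod]
  refine Finset.expect_le Finset.univ_nonempty fun y _ => ?_
  rw [solutionDensity_smul_sq hF ha]
  linarith [(abs_le.1 (abs_quadraticChar_le_one (a * (c - Q y)))).2]

theorem one_sub_le_solutionDensity_binary_prod [Finite V] (hF : ringChar F ≠ 2) {a b : F}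
    (ha : a ≠ 0) (hb : b ≠ 0) {Q : QuadraticForm F V} {c : F} (hQ : solutionDensity Q c ≤ 2) :
    1 - 1 / (Nat.card F : ℝ) ≤
      solutionDensity (((a • QuadraticMap.sq).prod (b • QuadraticMap.sq)).prod Q) c := by
  classical
  have := Fintype.ofFinite F
  have hdev : |solutionDensity Q c - 1| ≤ 1 :=
    abs_le.2 ⟨by linarith [solutionDensity_nonneg Q c], by linarith⟩
  have hmul : |(quadraticChar F (-(a * b)) : ℝ) * (solutionDensity Q c - 1)| ≤ 1 := by
    rw [abs_mul]
    exact mul_le_one₀ (abs_quadraticChar_le_one _) (abs_nonneg _) hdev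
  have hdiv := div_le_div_of_nonneg_right (abs_le.1 hmul).1 (Nat.cast_nonneg (α := ℝ) (Nat.card F))
  rw [solutionDensity_binary_prod hF ha hb, div_mul_eq_mul_div]
  linarith [neg_div (Nat.card F : ℝ) 1]

theorem solutionDensity_weightedSumSquares_le_two (hF : ringChar F ≠ 2) {ι : Type*} [Fintype ι]
    (w : ι → F) {c : F} (hc : c ≠ 0) :
    solutionDensity (QuadraticMap.weightedSumSquares F w) c ≤ 2 := by
  classical
  by_cases h : ∃ x, QuadraticMap.weightedSumSquares F w x = c
  · obtain ⟨i, hi⟩ := exists_weight_ne_zero_of_represented hc h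
    rw [solutionDensity_congr (weightedSumSquares_equivalent_prod w i)]
    exact solutionDensity_smul_sq_prod_le_two hF hi _ c
  · have hempty : Nat.card {x // QuadraticMap.weightedSumSquares F w x = c} = 0 :=
      Nat.card_eq_zero.2 (Or.inl (Subtype.isEmpty_of_false (not_exists.1 h)))
    rw [solutionDensity, hempty]
    norm_num

theorem solutionDensity_smul_sq_prod_zero (hF : ringChar F ≠ 2) [Finite V] {a c : F} (hc : c ≠ 0)
    (h : ∃ x, ((a • QuadraticMap.sq).prod (0 : QuadraticForm F V)) x = c) :
    solutionDensity ((a • QuadraticMap.sq).prod (0 : QuadraticForm F V)) c = 2 := by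
  classical
  have := Fintype.ofFinite F
  have := Fintype.ofFinite V
  obtain ⟨⟨t, y⟩, hty⟩ := h
  have hat : a * (t * t) = c := by simpa [QuadraticMap.prod_apply] using hty
  have ha : a ≠ 0 := left_ne_zero_of_mul (hat ▸ hc)
  have ht : t ≠ 0 := left_ne_zero_of_mul (right_ne_zero_of_mul (hat ▸ hc))
  have hac : quadraticChar F (a * c) = 1 := by
    rw [← hat, show a * (a * (t * t)) = (a * t) ^ 2 by ring,
      quadraticChar_sq_one' (mul_ne_zero ha ht)]
  simp only [solutionDensity_prod, zero_apply, sub_zero, Fintype.expect_const,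
    solutionDensity_smul_sq hF ha, hac]
  norm_num

theorem one_sub_le_solutionDensity_weightedSumSquares (hF : ringChar F ≠ 2) {ι : Type*} [Fintype ι]
    (w : ι → F) {c : F} (hc : c ≠ 0) (h : ∃ x, QuadraticMap.weightedSumSquares F w x = c) :
    1 - 1 / (Nat.card F : ℝ) ≤ solutionDensity (QuadraticMap.weightedSumSquares F w) c := by
  classical
  obtain ⟨i, hi⟩ := exists_weight_ne_zero_of_represented hc h
  have hw := weightedSumSquares_equivalent_prod w i
  by_cases hrest : ∃ j : {j // j ≠ i}, w j ≠ 0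
  · obtain ⟨j, hj⟩ := hrest
    have hsplit := (hw.trans ((QuadraticMap.Equivalent.refl _).prod
      (weightedSumSquares_equivalent_prod _ j))).trans (equivalent_prod_assoc _ _ _)
    rw [solutionDensity_congr hsplit]
    exact one_sub_le_solutionDensity_binary_prod hF hi hj
      (solutionDensity_weightedSumSquares_le_two hF _ hc)
  · have hzero : QuadraticMap.weightedSumSquares F (fun j : {j // j ≠ i} => w j) = 0 := by
      ext x
      by_contra hx
      exact hrest (exists_weight_ne_zero_of_represented hx ⟨x, rfl⟩)
    rw [hzero] at hw
    obtain ⟨e⟩ := hw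
    have hrep : ∃ y,
        ((w i • QuadraticMap.sq).prod (0 : QuadraticForm F ({j // j ≠ i} → F))) y = c :=
      h.imp' e fun x hx => (e.map_app x).trans hx
    rw [solutionDensity_congr ⟨e⟩, solutionDensity_smul_sq_prod_zero hF hc hrep]
    have : (0 : ℝ) ≤ 1 / Nat.card F := by positivity
    linarith

theorem one_sub_le_solutionDensity [Finite V] (hF : ringChar F ≠ 2)
    (Q : QuadraticForm F V) {c : F} (hc : c ≠ 0) (h : ∃ x, Q x = c) :
    1 - 1 / (Nat.card F : ℝ) ≤ solutionDensity Q c := by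
  have : Invertible (2 : F) := invertibleOfNonzero (Ring.two_ne_zero hF)
  obtain ⟨w, ⟨e⟩⟩ := Q.equivalent_weightedSumSquares
  rw [solutionDensity_congr ⟨e⟩]
  exact one_sub_le_solutionDensity_weightedSumSquares hF w hc
    (h.imp' e fun x hx => (e.map_app x).trans hx)

end FiniteFieldBounds

section Padic

variable {ι : Type*} [Fintype ι] [DecidableEq ι]

theorem toQuadraticForm'_map {R S : Type*} [CommRing R] [CommRing S] (f : R →+* S)
    (B : Matrix ι ι R) (x : ι → R) :
    (B.map f).toQuadraticForm' (f ∘ x) = f (B.toQuadraticForm' x) := by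
  simp [Matrix.toQuadraticForm', LinearMap.BilinMap.toQuadraticMap_apply,
    Matrix.toLinearMap₂'_apply, map_sum, map_mul]

variable {p : ℕ} [Fact p.Prime]

theorem isLocalRing_zmod_pow {k : ℕ} (hk : k ≠ 0) : IsLocalRing (ZMod (p ^ k)) := by
  have : Nontrivial (ZMod (p ^ k)) :=
    ZMod.nontrivial_iff.2 (Nat.one_lt_pow hk (Fact.out : p.Prime).one_lt).ne'
  exact IsLocalRing.of_surjective' (PadicInt.toZModPow (p := p) k) (ZMod.ringHom_surjective _)

theorem castHom_comp_toZModPow {k : ℕ} (hk : k ≠ 0) :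
    (ZMod.castHom (dvd_pow_self p hk) (ZMod p)).comp (PadicInt.toZModPow k) = PadicInt.toZMod := by
  refine ZMod.ringHom_eq_of_ker_eq _ _ ?_
  rw [PadicInt.ker_toZMod]
  have := RingHom.ker_isMaximal_of_surjective _ (ZMod.ringHom_surjective
    ((ZMod.castHom (dvd_pow_self p hk) (ZMod p)).comp (PadicInt.toZModPow k)))
  exact IsLocalRing.eq_maximalIdeal this

theorem solutionDensity_toZModPow (hp : p ≠ 2) (B : Matrix ι ι ℤ_[p]) {c : ℤ_[p]} (hc : IsUnit c)
    {k : ℕ} (hk : k ≠ 0) :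
    solutionDensity (B.map (PadicInt.toZModPow k)).toQuadraticForm' (PadicInt.toZModPow k c) =
      solutionDensity (B.map PadicInt.toZMod).toQuadraticForm' (PadicInt.toZMod c) := by
  set f := ZMod.castHom (dvd_pow_self p hk) (ZMod p)
  have hf : Function.Surjective f := ZMod.ringHom_surjective f
  have := isLocalRing_zmod_pow (p := p) hk
  have : IsLocalHom f := IsLocalHom.of_surjective f hf
  have hodd : Odd (Nat.card (f : ZMod (p ^ k) →+ ZMod p).ker) := by
    have hpk : Odd (p ^ k) := ((Fact.out : p.Prime).odd_of_ne_two hp).pow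
    rw [← Nat.card_zmod (p ^ k),
      natCard_eq_mul_natCard_ker (f := (f : ZMod (p ^ k) →+ ZMod p)) hf] at hpk
    exact (Nat.odd_mul.1 hpk).2
  have hreduce := solutionDensity_eq_of_surjective f hf hodd
    ((f : ZMod (p ^ k) →+ ZMod p).compLeft ι) hf.comp_left
    (toQuadraticForm'_map f (B.map (PadicInt.toZModPow k))) (hc.map (PadicInt.toZModPow k))
  rwa [Matrix.map_map, ← RingHom.coe_comp, ← RingHom.comp_apply,
    castHom_comp_toZModPow hk] at hreduce

theorem local_density_coprime_odd_general (hp : p ≠ 2) (B : Matrix ι ι ℤ_[p]) {c : ℤ_[p]}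
    (hc : IsUnit c) (h : ∃ x, B.toQuadraticForm' x = c) :
    ∃ β : ℝ, Filter.Tendsto
      (fun k => solutionDensity (B.map (PadicInt.toZModPow k)).toQuadraticForm'
        (PadicInt.toZModPow k c)) Filter.atTop (nhds β) ∧ 1 - 1 / (p : ℝ) ≤ β := by
  obtain ⟨x, hx⟩ := h
  refine ⟨solutionDensity (B.map PadicInt.toZMod).toQuadraticForm' (PadicInt.toZMod c), ?_, ?_⟩
  · refine tendsto_const_nhds.congr' ?_
    filter_upwards [Filter.eventually_ne_atTop 0] with k hk
    exact (solutionDensity_toZModPow hp B hc hk).symm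
  · have hbound := one_sub_le_solutionDensity ((ZMod.ringChar_zmod_n p).trans_ne hp) _
      (hc.map PadicInt.toZMod).ne_zero
      ⟨PadicInt.toZMod ∘ x, (toQuadraticForm'_map PadicInt.toZMod B x).trans (congrArg _ hx)⟩
    rwa [Nat.card_zmod] at hbound

end Padic

/-- The upper triangular matrix of coefficients of the integral quaternary form with Gram matrix
`A`. It is used instead of `A / 2`, which need not be integral. -/
def coeffMatrix (A : Matrix (Fin 4) (Fin 4) ℤ) : Matrix (Fin 4) (Fin 4) ℤ :=
  Matrix.of fun i j => if i = j then A i i / 2 else if i < j then A i j else 0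

theorem toQuadraticForm'_coeffMatrix {R : Type*} [CommRing R] (A : Matrix (Fin 4) (Fin 4) ℤ)
    (x : Fin 4 → R) : ((coeffMatrix A).map (Int.castRingHom R)).toQuadraticForm' x = Qval A x := by
  have hterm (i j : Fin 4) : x i • x j • (coeffMatrix A).map (Int.castRingHom R) i j =
      (if i = j then ((A i i / 2 : ℤ) : R) * x i ^ 2 else 0) +
        if i < j then (A i j : R) * (x i * x j) else 0 := by
    simp only [Matrix.map_apply, coeffMatrix, Matrix.of_apply, smul_eq_mul, Int.coe_castRingHom]
    rcases lt_trichotomy i j with hij | rfl | hij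
    · rw [if_neg hij.ne, if_pos hij, if_neg hij.ne, if_pos hij]
      ring
    · rw [if_pos rfl, if_pos rfl, if_neg (lt_irrefl i)]
      ring
    · simp [hij.ne', hij.not_gt]
  simp only [Matrix.toQuadraticForm', LinearMap.BilinMap.toQuadraticMap_apply,
    Matrix.toLinearMap₂'_apply, hterm, Finset.sum_add_distrib, Finset.sum_ite_eq, Finset.mem_univ,
    if_true, ← Finset.sum_filter, Finset.filter_lt_eq_Ioi, Qval]

theorem solutionDensity_coeffMatrix (A : Matrix (Fin 4) (Fin 4) ℤ) (p n k : ℕ) [NeZero p] :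
    solutionDensity ((coeffMatrix A).map (Int.castRingHom (ZMod (p ^ k)))).toQuadraticForm' n =
      localCount A p n k / (p : ℝ) ^ (3 * k) := by
  have hp : (p : ℝ) ^ k ≠ 0 := pow_ne_zero _ (NeZero.ne _)
  simp only [solutionDensity, toQuadraticForm'_coeffMatrix, localCount, Nat.card_fun, Nat.card_zmod,
    Nat.card_fin]
  push_cast
  rw [show ((p : ℝ) ^ k) ^ 4 = p ^ k * p ^ (3 * k) by ring, mul_div_mul_left _ _ hp]

/-- If `p` is odd, `p ∤ n`, and `n` is represented over `ℤ_p`, then `β_p(Q;n) ≥ 1 - 1/p`. -/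
theorem local_density_coprime_odd
    (A : Matrix (Fin 4) (Fin 4) ℤ) (p n : ℕ) [Fact p.Prime]
    (hA : IsGram A) (hprim : IsPrimitiveQF A) (hpd : PosDefQF A)
    (hodd : p ≠ 2) (hn : 0 < n) (hcop : ¬ p ∣ n)
    (h : ∃ x : Fin 4 → ℤ_[p], Qval A x = (n : ℤ_[p])) :
    DensityBound A p n (1 - 1 / (p : ℝ)) := by
  have hunit : IsUnit (n : ℤ_[p]) := PadicInt.isUnit_iff.2 <| PadicInt.norm_natCast_eq_one_iff.2 <|
    ((Fact.out : p.Prime).coprime_iff_not_dvd).2 hcop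
  have hdensity := local_density_coprime_odd_general hodd
    ((coeffMatrix A).map (Int.castRingHom ℤ_[p])) hunit
    (h.imp fun x hx => (toQuadraticForm'_coeffMatrix A x).trans hx)
  simpa only [DensityBound, Matrix.map_map, ← RingHom.coe_comp,
    RingHom.ext_int _ (Int.castRingHom _), map_natCast, solutionDensity_coeffMatrix] using hdensity
end
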